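/- Let d be a positive integer and 𝔞 a proper ideal of a commutative Noetherian local ring R such that either dim R = d, or dim R/𝔞 = d − 1, or ara(𝔞) = d − 1. Let X be a (ℤ-indexed) chain complex of R-modules ⋯ → X_{i+1} →^{d_{i+1}} X_i →^{d_i} X_{i−1} → ⋯ in which every module X_i is 𝔞-cofinite. Then the homology module H_i(X) is 𝔞-cofinite for every i ∈ ℤ if and only if the R-module Ext^j_R(R/𝔞, coker d_{i+1}) is finitely generated for every i ∈ ℤ and every integer 0 ≤ j ≤ d − 2, where coker d_{i+1} = X_i / im(d_{i+1} : X_{i+1} → X_i). -/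

import Mathlib

/-!
The heart of the matter is that an `𝔞`-torsion module `M` is `𝔞`-cofinite as soon as
`Ext^i_R(R/𝔞, M)` is finitely generated for `i < d`. Regard `M` as an object of the derived category
and replace it repeatedly by the homotopy fiber of multiplication by an element `x ∈ 𝔞`. The
hypothesis on `Ext` passes to the fiber, the conclusion passes back from it, and `x` becomes
nilpotent on cohomology. Once the elements used generate an ideal containing `𝔞`, finiteness of
`Ext^i_R(R/𝔞, -)` up to a given degree amounts to finiteness of cohomology up to that degree.

* If `ara 𝔞 < d`, the fibers are taken along generators of `𝔞` up to radical: after fewer than `d`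
  steps the cohomology is concentrated in degrees `< d`, where it is finitely generated.
* If `dim R ≤ d` or `dim R/𝔞 < d`, the module has a finitely generated submodule such that all
  primes in the support of the quotient have coheight `< d`. Choosing `x` by prime avoidance lowers
  this bound by one for the cokernel of multiplication by `x`, so that the bound `d - i` persists
  for the cohomology in degree `i`, which is therefore finitely generated in degrees `≥ d`. Such an
  `x` exists because after localization the cohomology becomes Artinian, by Melkersson's criterion:
  a torsion module is Artinian if its elements killed by `𝔞` form an Artinian module.

For a complex, let `B_i` be the image of `d_{i+1}` and `C_i` its cokernel. In the exact sequences
`0 → B_i → X_i → C_i → 0` and `0 → H_i → C_i → B_{i-1} → 0`, the hypothesis on `Ext^j(R/𝔞, C_i)` for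
`j ≤ d - 2` makes `Ext^j(R/𝔞, B_i)` finitely generated for `j ≤ d - 1`, so `B_i`, and with it `C_i`
and `H_i`, is cofinite. Conversely, if all `H_i` are cofinite, finiteness of `Ext^j(R/𝔞, C_i)`
follows by induction on `j`, simultaneously for all `i`.
-/

open CategoryTheory

universe u

/-- The `R`-module `Ext^i_R(N, M)` for two `R`-modules (objects of `ModuleCat R`). -/
noncomputable def extObj {R : Type u} [CommRing R] (N M : ModuleCat.{u} R) (i : ℕ) :
    ModuleCat.{u} R :=
  ((Ext R (ModuleCat.{u} R) i).obj (Opposite.op N)).obj M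

/-- The `R`-module `Ext^i_R(R/𝔞, M)`. -/
noncomputable def extIdeal {R : Type u} [CommRing R] (𝔞 : Ideal R) (i : ℕ)
    (M : ModuleCat.{u} R) : ModuleCat.{u} R :=
  extObj (ModuleCat.of R (R ⧸ 𝔞)) M i

/-- An `R`-module `M` is `𝔞`-cofinite if `Supp_R M ⊆ V(𝔞)` and `Ext^i_R(R/𝔞, M)` is a finitely
generated `R`-module for every `i ≥ 0`. -/
def IsCofinite {R : Type u} [CommRing R] (𝔞 : Ideal R) (M : ModuleCat.{u} R) : Prop :=
  Module.support R M ⊆ PrimeSpectrum.zeroLocus (𝔞 : Set R) ∧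
    ∀ i : ℕ, Module.Finite R (extIdeal 𝔞 i M)

/-- The Krull dimension `dim_R M` of an `R`-module `M`: the Krull dimension of its support,
i.e. the supremum of `dim R/𝔭` over primes `𝔭` in the support of `M`. -/
noncomputable def moduleDim (R : Type u) [CommRing R] (M : Type u) [AddCommGroup M]
    [Module R M] : WithBot ℕ∞ :=
  Order.krullDim (Module.support R M)

/-- An `R`-module `M` is in `FD_{≤n}` if there is a finitely generated submodule `N ⊆ M`
with `dim_R (M/N) ≤ n`. -/
def MemFD (R : Type u) [CommRing R] (n : ℕ) (M : Type u) [AddCommGroup M] [Module R M] : Prop :=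
  ∃ N : Submodule R M, N.FG ∧ moduleDim R (M ⧸ N) ≤ (n : WithBot ℕ∞)

/-- An `R`-module `M` is `𝔞`-torsion if every element is annihilated by some power of `𝔞`. -/
def IsTorsionIdeal {R : Type u} [CommRing R] (𝔞 : Ideal R) (M : Type u) [AddCommGroup M]
    [Module R M] : Prop :=
  ∀ m : M, ∃ n : ℕ, ∀ a ∈ 𝔞 ^ n, a • m = 0

/-- The arithmetic rank of an ideal `𝔞`: the least `n` such that there exist `a₁, …, aₙ ∈ R`
with `Rad (a₁, …, aₙ) = Rad 𝔞`. -/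
noncomputable def arithRank {R : Type u} [CommRing R] (𝔞 : Ideal R) : ℕ :=
  sInf {n : ℕ | ∃ f : Fin n → R, (Ideal.span (Set.range f)).radical = 𝔞.radical}

universe w

section Support

open Submodule

variable {R : Type*} [CommRing R]

theorem support_subset_union_of_exact {A B C : Type*} [AddCommGroup A] [Module R A]
    [AddCommGroup B] [Module R B] [AddCommGroup C] [Module R C] (f : A →ₗ[R] B) (g : B →ₗ[R] C)
    (h : Function.Exact f g) :
    Module.support R B ⊆ Module.support R A ∪ Module.support R C := by
  intro p hp
  by_contra hAC
  obtain ⟨hA, hC⟩ := not_or.1 hAC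
  rw [Module.notMem_support_iff'] at hA hC
  refine Module.notMem_support_iff'.2 (fun b => ?_) hp
  obtain ⟨s, hs, hsb⟩ := hC (g b)
  obtain ⟨a, ha⟩ := (h (s • b)).1 (by rw [map_smul, hsb])
  obtain ⟨t, ht, hta⟩ := hA a
  exact ⟨t * s, p.asIdeal.primeCompl.mul_mem ht hs,
    by rw [mul_smul, ← ha, ← map_smul, hta, map_zero]⟩

theorem exists_fg_map_eq {A B : Type*} [AddCommGroup A] [Module R A] [AddCommGroup B] [Module R B]
    (f : A →ₗ[R] B) {N : Submodule R B} (hN : N.FG) (hle : N ≤ LinearMap.range f) :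
    ∃ K : Submodule R A, K.FG ∧ K.map f = N := by
  classical
  obtain ⟨s, rfl⟩ := hN
  obtain ⟨t, -, rfl⟩ := Finset.subset_set_image_iff.1
    (show (s : Set B) ⊆ f '' Set.univ from fun b hb => by simpa using hle (subset_span hb))
  exact ⟨span R t, ⟨t, rfl⟩, by rw [map_span, Finset.coe_image]⟩

end Support

section Torsion

open Submodule

theorem torsionBySet_sup {R A : Type*} [CommRing R] [AddCommGroup A] [Module R A] (I J : Ideal R) :
    torsionBySet R A ((I ⊔ J : Ideal R) : Set R) = torsionBySet R A I ⊓ torsionBySet R A J := by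
  refine le_antisymm (le_inf (torsionBySet_le_torsionBySet_of_subset (le_sup_left (a := I)))
    (torsionBySet_le_torsionBySet_of_subset (le_sup_right (b := J)))) fun a ha => ?_
  rw [mem_inf, mem_torsionBySet_iff, mem_torsionBySet_iff] at ha
  rw [mem_torsionBySet_iff]
  rintro ⟨r, hr⟩
  obtain ⟨x, hx, y, hy, rfl⟩ := mem_sup.1 hr
  exact (add_smul x y a).trans (by rw [ha.1 ⟨x, hx⟩, ha.2 ⟨y, hy⟩, add_zero])

/-- An `R`-module in which every element is killed by a power of the ideal `I`. This is
`IsTorsionIdeal` without its constraint that `R` and the module lie in the same universe, which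
morphism spaces of the derived category do not satisfy. -/
def IsPowTorsion {R : Type*} [CommRing R] (I : Ideal R) (A : Type*) [AddCommGroup A] [Module R A] :
    Prop :=
  ∀ a : A, ∃ k : ℕ, ∀ r ∈ I ^ k, r • a = 0

namespace IsPowTorsion

variable {R A B C : Type*} [CommRing R] [AddCommGroup A] [Module R A] [AddCommGroup B]
  [Module R B] [AddCommGroup C] [Module R C] {I J : Ideal R}

theorem of_injective (f : A →ₗ[R] B) (hf : Function.Injective f) (hB : IsPowTorsion I B) :
    IsPowTorsion I A := fun a => by
  obtain ⟨k, hk⟩ := hB (f a)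
  exact ⟨k, fun r hr => hf (by rw [map_smul, hk r hr, map_zero])⟩

theorem of_surjective (f : A →ₗ[R] B) (hf : Function.Surjective f) (hA : IsPowTorsion I A) :
    IsPowTorsion I B := hf.forall.2 fun a => by
  obtain ⟨k, hk⟩ := hA a
  exact ⟨k, fun r hr => by rw [← map_smul, hk r hr, map_zero]⟩

theorem anti (hIJ : I ≤ J) (hA : IsPowTorsion J A) : IsPowTorsion I A := fun a => by
  obtain ⟨k, hk⟩ := hA a
  exact ⟨k, fun r hr => hk r (Ideal.pow_right_mono hIJ k hr)⟩

theorem of_exact [IsNoetherianRing R] (f : A →ₗ[R] B) (g : B →ₗ[R] C) (hfg : Function.Exact f g)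
    (hA : IsPowTorsion I A) (hC : IsPowTorsion I C) : IsPowTorsion I B := fun b => by
  obtain ⟨k, hk⟩ := hC (g b)
  obtain ⟨S, hS⟩ := IsNoetherian.noetherian (I ^ k)
  have hrange : ∀ s ∈ S, ∃ n : ℕ, ∀ r ∈ I ^ n, r • s • b = 0 := fun s hs => by
    obtain ⟨a, ha⟩ := (hfg (s • b)).1 (by rw [map_smul, hk s (hS ▸ subset_span hs)])
    obtain ⟨n, hn⟩ := hA a
    exact ⟨n, fun r hr => by rw [← ha, ← map_smul, hn r hr, map_zero]⟩
  choose! n hn using hrange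
  have hle : I ^ k ≤ (torsionBySet R B ((I ^ S.sup n : Ideal R) : Set R)).comap
      (LinearMap.toSpanSingleton R B b) := hS ▸ span_le.2 fun s hs =>
    (mem_torsionBySet_iff _ _).2 fun r => hn s hs r (Ideal.pow_le_pow_right (Finset.le_sup hs) r.2)
  refine ⟨S.sup n + k, fun r hr => ?_⟩
  rw [pow_add] at hr
  refine Submodule.mul_induction_on hr (fun x hx y hy => ?_) fun x y hx hy => by
    rw [add_smul, hx, hy, add_zero]
  rw [mul_smul]
  exact (mem_torsionBySet_iff _ _).1 (hle hy) ⟨x, hx⟩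

theorem support_torsionBySet [IsNoetherianRing R] (hA : IsPowTorsion I A) :
    Module.support R (torsionBySet R A (I : Set R)) = Module.support R A := by
  refine (Module.support_subset_of_injective _ (subtype_injective _)).antisymm fun p hp => ?_
  obtain ⟨a, ha⟩ := Module.mem_support_iff_exists_annihilator.1 hp
  obtain ⟨q, hq, hqp⟩ := Ideal.exists_minimalPrimes_le ha
  obtain ⟨hqprime, x, rfl⟩ := isAssociatedPrime_iff.1 <|
    Module.associatedPrimes.minimalPrimes_annihilator_subset_associatedPrimes R (R ∙ a) hq
  obtain ⟨k, hk⟩ := hA a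
  have hIx : I ≤ colon ⊥ {x} := hqprime.le_of_pow_le (n := k) <| le_trans (fun r hr =>
    (mem_annihilator_span_singleton a r).2 (hk r hr)) hq.1.2
  have hx {r : R} : r • x = 0 ↔ r ∈ (colon ⊥ {x} : Ideal R) := by simp [mem_colon_singleton]
  refine Module.mem_support_iff_exists_annihilator.2 ⟨⟨x, (mem_torsionBySet_iff _ _).2 fun r => ?_⟩,
    fun r hr => hqp ?_⟩
  · exact congrArg Subtype.val (hx.2 (hIx r.2))
  · rw [mem_annihilator_span_singleton] at hr
    exact hx.1 (Subtype.ext (congrArg (fun y => y.1) hr :))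

end IsPowTorsion

end Torsion

section AlmostFinite

open Submodule

/-- An `R`-module which has a finitely generated submodule such that every prime in the support of
the quotient has coheight less than `s`. For `s = 0` this is finite generation, and for `s = n + 1`
it is membership in the class `FD_{≤ n}` formalised by `MemFD`. -/
def AlmostFinite (R : Type*) [CommRing R] (s : ℕ) (A : Type*) [AddCommGroup A] [Module R A] :
    Prop :=
  ∃ N : Submodule R A, N.FG ∧ ∀ p ∈ Module.support R (A ⧸ N), Order.coheight p < s

namespace AlmostFinite

variable {R : Type*} [CommRing R] {A B C : Type*} [AddCommGroup A] [Module R A]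
  [AddCommGroup B] [Module R B] [AddCommGroup C] [Module R C] {s : ℕ}

theorem of_finite [Module.Finite R A] : AlmostFinite R s A :=
  ⟨⊤, Module.Finite.fg_top, by simp [Module.support_eq_empty]⟩

theorem finite (hA : AlmostFinite R 0 A) : Module.Finite R A := by
  obtain ⟨N, hN, h⟩ := hA
  have hsupp : Module.support R (A ⧸ N) = ∅ :=
    Set.eq_empty_of_forall_notMem fun p hp => not_lt_bot (h p hp)
  rw [Module.support_eq_empty_iff, Submodule.Quotient.subsingleton_iff] at hsupp
  exact ⟨hsupp ▸ hN⟩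

variable [IsNoetherianRing R]

theorem of_exact (f : A →ₗ[R] B) (g : B →ₗ[R] C) (hfg : Function.Exact f g)
    (hA : AlmostFinite R s A) (hC : AlmostFinite R s C) : AlmostFinite R s B := by
  obtain ⟨N, hN, hA⟩ := hA
  obtain ⟨P, hP, hC⟩ := hC
  have hPg : (P ⊓ LinearMap.range g).FG :=
    have := isNoetherian_of_fg_of_noetherian P hP
    FG.of_le hP inf_le_left
  obtain ⟨K, hK, hKg⟩ := exists_fg_map_eq g hPg inf_le_right
  have hf : N ≤ (N.map f ⊔ K).comap f := map_le_iff_le_comap.1 le_sup_left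
  have hg : N.map f ⊔ K ≤ P.comap g := by
    refine sup_le (map_le_iff_le_comap.2 fun a _ => ?_)
      (map_le_iff_le_comap.1 (hKg.trans_le inf_le_left))
    simp [hfg.apply_apply_eq_zero a]
  refine ⟨N.map f ⊔ K, (hN.map f).sup hK, fun p hp => ?_⟩
  refine (support_subset_union_of_exact (mapQ _ _ f hf) (mapQ _ _ g hg) ?_ hp).elim (hA p) (hC p)
  refine (mkQ_surjective _).forall.2 fun b => ⟨fun hb => ?_, ?_⟩
  · obtain ⟨k, hk, hkb⟩ : g b ∈ K.map g :=
      hKg ▸ ⟨by simpa [Submodule.Quotient.mk_eq_zero] using hb, b, rfl⟩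
    obtain ⟨a, ha⟩ := (hfg (b - k)).1 (by rw [map_sub, hkb, sub_self])
    refine ⟨N.mkQ a, (Submodule.Quotient.eq _).2 ?_⟩
    rw [ha, sub_sub_cancel_left]
    exact neg_mem (mem_sup_right hk)
  · rintro ⟨a, ha⟩
    obtain ⟨a, rfl⟩ := mkQ_surjective _ a
    rw [← ha, mkQ_apply, mapQ_apply, mapQ_apply, hfg.apply_apply_eq_zero a, Quotient.mk_zero]

theorem of_injective (g : B →ₗ[R] C) (hg : Function.Injective g) (hC : AlmostFinite R s C) :
    AlmostFinite R s B :=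
  of_exact (0 : PUnit →ₗ[R] B) g ((LinearMap.exact_zero_iff_injective _ g).2 hg) of_finite hC

theorem of_surjective (f : A →ₗ[R] B) (hf : Function.Surjective f) (hA : AlmostFinite R s A) :
    AlmostFinite R s B :=
  of_exact f (0 : B →ₗ[R] PUnit) ((LinearMap.exact_zero_iff_surjective _ f).2 hf) hA of_finite

theorem of_le {N₁ N₂ : Submodule R A} (h : N₁ ≤ N₂) (hN : AlmostFinite R s N₂) :
    AlmostFinite R s N₁ :=
  of_injective (inclusion h) (inclusion_injective h) hN

theorem of_smul_mem {I : Ideal R} {K N : Submodule R A} (hN : AlmostFinite R s N)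
    (hK : ∀ a ∈ I, ∀ k ∈ K, a • k ∈ N)
    (hT : AlmostFinite R s (K ⊓ torsionBySet R A I : Submodule R A)) : AlmostFinite R s K := by
  induction I, IsNoetherian.noetherian I using fg_induction generalizing K with
  | singleton x =>
    rw [torsionBySet_span_singleton_eq] at hT
    let g : K →ₗ[R] N := (LinearMap.lsmul R A x).restrict (hK x (mem_span_singleton_self x))
    refine of_exact (inclusion inf_le_left) g (fun k => ⟨fun hk => ⟨⟨k, k.2, ?_⟩, rfl⟩, ?_⟩) hT hN
    · exact congrArg Subtype.val hk
    · rintro ⟨a, rfl⟩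
      exact Subtype.ext a.2.2
  | sup I J _ _ hI hJ =>
    refine hI (fun a ha => hK a (mem_sup_left ha)) (hJ (fun a ha k hk =>
      hK a (mem_sup_right ha) k hk.1) ?_)
    rwa [inf_assoc, ← torsionBySet_sup]

theorem torsionBySet_pow {I : Ideal R} (hT : AlmostFinite R s (torsionBySet R A I)) (k : ℕ) :
    AlmostFinite R s (torsionBySet R A ((I ^ k : Ideal R) : Set R)) := by
  induction k with
  | zero =>
    rw [pow_zero, Ideal.one_eq_top, top_coe, torsionBySet_univ]
    exact of_finite
  | succ k ih =>
    refine of_smul_mem (I := I) ih (fun a ha x hx => ?_) (of_le inf_le_right hT)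
    rw [mem_torsionBySet_iff] at hx ⊢
    rintro ⟨b, hb⟩
    rw [smul_smul]
    exact hx ⟨b * a, pow_succ I k ▸ Ideal.mul_mem_mul hb ha⟩

end AlmostFinite

end AlmostFinite

section Artinian

open Submodule
open scoped Pointwise

theorem exists_forall_ge_le_of_antitone {α : Type*} [PartialOrder α] [WellFoundedLT α]
    (f : ℕ → ℕ → α) (hf : Antitone f) (hf' : ∀ i, Antitone (f i)) :
    ∃ n, ∀ i ≥ n, ∀ k, f n k ≤ f i k := by
  have hstab (k : ℕ) : ∃ n, ∀ i ≥ n, f n k ≤ f i k := by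
    obtain ⟨_, ⟨n, rfl⟩, hn⟩ := wellFounded_lt.has_min (Set.range fun i => f i k) ⟨_, 0, rfl⟩
    exact ⟨n, fun i hi => not_lt_iff_le_imp_ge.1 (hn _ ⟨i, rfl⟩) (hf hi k)⟩
  choose ν hν using hstab
  obtain ⟨_, ⟨⟨n₀, k₀⟩, rfl⟩, hmin⟩ :=
    wellFounded_lt.has_min (Set.range fun z : ℕ × ℕ => f z.1 z.2) ⟨_, (0, 0), rfl⟩
  obtain ⟨n, hn⟩ := (insert n₀ ((Finset.range k₀).image ν)).exists_le
  have hn₀ : n₀ ≤ n := hn n₀ (Finset.mem_insert_self _ _)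
  refine ⟨n, fun i hi k => ?_⟩
  rcases lt_or_ge k k₀ with hk | hk
  · have hνn : ν k ≤ n := hn _ (Finset.mem_insert_of_mem
      (Finset.mem_image_of_mem ν (Finset.mem_range.2 hk)))
    exact (hf hνn k).trans (hν k i (hνn.trans hi))
  · have hle {i : ℕ} (hi : n₀ ≤ i) : f i k ≤ f n₀ k₀ := (hf hi k).trans (hf' n₀ hk)
    exact (hle hn₀).trans
      (not_lt_iff_le_imp_ge.1 (hmin _ ⟨(i, k), rfl⟩) (hle (hn₀.trans hi)))

section Melkersson

variable {R : Type*} [CommRing R]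

theorem le_of_forall_pow_smul_inf_torsionBy_le {M : Type*} [AddCommGroup M] [Module R M] {x : R}
    (hx : ∀ m : M, ∃ k : ℕ, x ^ k • m = 0) {B C : Submodule R M} (hCB : C ≤ B)
    (h : ∀ k : ℕ, x ^ k • B ⊓ torsionBy R M x ≤ x ^ k • C) : B ≤ C := by
  have hk (k : ℕ) : ∀ b ∈ B, x ^ k • b = 0 → b ∈ C := by
    induction k with
    | zero => simp +contextual
    | succ k ih =>
      intro b hb hbk
      obtain ⟨c, hc, hbc⟩ := h k ⟨smul_mem_pointwise_smul b _ B hb,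
        (mem_torsionBy_iff x _).2 (by rw [smul_smul, ← pow_succ', hbk])⟩
      rw [← sub_add_cancel b c]
      exact C.add_mem (ih _ (B.sub_mem hb (hCB hc)) (by
        rw [smul_sub, sub_eq_zero]
        exact hbc.symm)) hc
  intro b hb
  obtain ⟨k, hbk⟩ := hx b
  exact hk k b hb hbk

theorem isArtinian_of_torsionBy {M : Type*} [AddCommGroup M] [Module R M] (x : R)
    (hx : ∀ m : M, ∃ k : ℕ, x ^ k • m = 0) [IsArtinian R (torsionBy R M x)] : IsArtinian R M := by
  rw [← monotone_stabilizes_iff_artinian]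
  intro B
  let C (i : ℕ) : Submodule R M := OrderDual.ofDual (B i)
  have hC : Antitone C := B.monotone
  obtain ⟨n, hn⟩ := exists_forall_ge_le_of_antitone
    (fun i k => (x ^ k • C i).submoduleOf (torsionBy R M x))
    (fun i j hij k => comap_mono (smul_mono_right _ (hC hij)))
    (fun i => antitone_nat_of_succ_le fun k => comap_mono <| by
      rw [pow_succ, mul_smul]
      exact smul_mono_right _ (smul_le_self_of_tower x (C i)))
  refine ⟨n, fun i hi => le_antisymm (hC hi) ?_⟩
  exact le_of_forall_pow_smul_inf_torsionBy_le hx (hC hi) fun k m hm =>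
    hn i hi k (x := ⟨m, hm.2⟩) hm.1

theorem isArtinian_of_torsionBySet {R : Type*} [CommRing R] [IsNoetherianRing R] (I : Ideal R)
    {M : Type*} [AddCommGroup M] [Module R M] (hI : IsPowTorsion I M)
    [hM : IsArtinian R (torsionBySet R M I)] : IsArtinian R M := by
  induction I, IsNoetherian.noetherian I using fg_induction generalizing M with
  | singleton x =>
    rw [torsionBySet_span_singleton_eq] at hM
    refine isArtinian_of_torsionBy x fun m => ?_
    obtain ⟨k, hk⟩ := hI m
    exact ⟨k, hk _ (Ideal.pow_mem_pow (mem_span_singleton_self x) k)⟩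
  | sup I J _ _ ihI ihJ =>
    have hle : (torsionBySet R (torsionBySet R M J) I).map (torsionBySet R M J).subtype ≤
        torsionBySet R M ((I ⊔ J : Ideal R) : Set R) := by
      rw [torsionBySet_sup]
      rintro _ ⟨m, hm, rfl⟩
      exact ⟨(mem_torsionBySet_iff _ _).2 fun a =>
        congrArg Subtype.val ((mem_torsionBySet_iff _ _).1 hm a), m.2⟩
    have : IsArtinian R (torsionBySet R (torsionBySet R M J) I) :=
      have := isArtinian_of_le hle
      isArtinian_of_injective _
        (equivMapOfInjective _ (subtype_injective (torsionBySet R M J)) _).injective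
    have := ihI ((hI.anti le_sup_left).of_injective _ (subtype_injective (torsionBySet R M J)))
    exact ihJ (hI.anti le_sup_right)

end Melkersson

section Secondary

variable {R : Type*} [CommRing R] {A : Type*} [AddCommGroup A] [Module R A]

theorem mem_radical_annihilator_iff {B : Submodule R A} {x : R} :
    x ∈ B.annihilator.radical ↔ ∃ k : ℕ, x ^ k • B = ⊥ := by
  simp only [Ideal.mem_radical_iff, mem_annihilator, eq_bot_iff, SetLike.le_def]
  refine exists_congr fun k => ⟨?_, fun h b hb => h (smul_mem_pointwise_smul b _ B hb)⟩
  rintro h _ ⟨b, hb, rfl⟩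
  exact h b hb

theorem smul_eq_self_of_supIrred [IsArtinian R A] {B : Submodule R A} (hB : SupIrred B) {x : R}
    (hx : x ∉ B.annihilator.radical) : x • B = B := by
  let f := algebraMap R (Module.End R B) x
  have hf (n : ℕ) (b : B) : (f ^ n) b = x ^ n • b := by
    rw [← map_pow, Module.algebraMap_end_apply]
  obtain ⟨n, hn, hsup⟩ := ((Filter.eventually_ge_atTop 1).and
    f.eventually_codisjoint_ker_pow_range_pow).exists
  have hsup := congrArg (map B.subtype) (codisjoint_iff.1 hsup)
  rw [Submodule.map_sup, map_subtype_top] at hsup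
  rcases hB.2 hsup with h | h
  · refine (hx (mem_radical_annihilator_iff.2 ⟨n, eq_bot_iff.2 ?_⟩)).elim
    rintro _ ⟨b, hb, rfl⟩
    obtain ⟨c, hc, rfl⟩ := h.ge hb
    exact congrArg Subtype.val ((hf n c).symm.trans hc)
  · refine (smul_le_self_of_tower x B).antisymm fun b hb => ?_
    obtain ⟨_, ⟨c, rfl⟩, rfl⟩ := h.ge hb
    refine ⟨x ^ (n - 1) • (c : A), B.smul_mem _ c.2, ?_⟩
    rw [hf, ← Nat.sub_add_cancel hn, pow_succ']
    exact smul_smul x _ (c : A)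

theorem isPrime_radical_annihilator_of_supIrred [IsArtinian R A] {B : Submodule R A}
    (hB : SupIrred B) : B.annihilator.radical.IsPrime := by
  refine ⟨fun h => hB.ne_bot ?_, fun {x y} hxy => ?_⟩
  · rwa [Ideal.radical_eq_top, annihilator_eq_top_iff] at h
  · by_contra! hxy'
    have hpow (k : ℕ) : (x * y) ^ k • B = B := by
      induction k with
      | zero => simp
      | succ k ih =>
        rw [pow_succ, mul_smul, mul_smul, smul_eq_self_of_supIrred hB hxy'.2,
          smul_eq_self_of_supIrred hB hxy'.1, ih]
    obtain ⟨k, hk⟩ := mem_radical_annihilator_iff.1 hxy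
    exact hB.ne_bot ((hpow k).symm.trans hk)

theorem exists_primes_torsionBySet_pow_sup_smul_eq_top [IsNoetherianRing R] [IsArtinian R A]
    (I : Ideal R) : ∃ (P : Finset (Ideal R)) (k : ℕ), (∀ q ∈ P, q.IsPrime ∧ ¬ I ≤ q) ∧
      ∀ x : R, (∀ q ∈ P, x ∉ q) →
        torsionBySet R A ((I ^ k : Ideal R) : Set R) ⊔ x • ⊤ = ⊤ := by
  classical
  obtain ⟨s, hs, hirr⟩ := exists_supIrred_decomposition (⊤ : Submodule R A)
  have hpow (B : Submodule R A) : ∃ k : ℕ, I ≤ B.annihilator.radical →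
      B ≤ torsionBySet R A ((I ^ k : Ideal R) : Set R) := by
    by_cases hI : I ≤ B.annihilator.radical
    · obtain ⟨k, hk⟩ := Ideal.exists_pow_le_of_le_radical_of_fg hI (IsNoetherian.noetherian I)
      exact ⟨k, fun _ b hb => (mem_torsionBySet_iff _ _).2 fun a =>
        mem_annihilator.1 (hk a.2) b hb⟩
    · exact ⟨0, fun h => (hI h).elim⟩
  choose k hk using hpow
  refine ⟨(s.image fun B => B.annihilator.radical).filter fun q => ¬ I ≤ q, s.sup k,
    fun q hq => ?_, fun x hx => top_le_iff.1 (hs.ge.trans (Finset.sup_le fun B hB => ?_))⟩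
  · obtain ⟨hq, hIq⟩ := Finset.mem_filter.1 hq
    obtain ⟨B, hB, rfl⟩ := Finset.mem_image.1 hq
    exact ⟨isPrime_radical_annihilator_of_supIrred (hirr hB), hIq⟩
  by_cases hI : I ≤ B.annihilator.radical
  · exact le_sup_of_le_left ((hk B hI).trans
      (torsionBySet_le_torsionBySet_pow _ _ (Finset.le_sup hB) I))
  · refine le_sup_of_le_right ?_
    rw [id, ← smul_eq_self_of_supIrred (hirr hB) (hx _ (Finset.mem_filter.2
      ⟨Finset.mem_image_of_mem _ hB, hI⟩))]
    exact smul_mono_right x le_top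

end Secondary

end Artinian

section Localization

open Submodule
open scoped Pointwise

theorem isArtinian_of_isMaximal_of_mem_support {R : Type*} [CommRing R] [IsNoetherianRing R]
    {M : Type*} [AddCommGroup M] [Module R M] [Module.Finite R M]
    (h : ∀ p ∈ Module.support R M, p.asIdeal.IsMaximal) : IsArtinian R M := by
  have : Ring.KrullDimLE 0 (R ⧸ Module.annihilator R M) := .mk₀ fun I hI => by
    let π := Ideal.Quotient.mk (Module.annihilator R M)
    let p := PrimeSpectrum.comap π ⟨I, hI⟩
    have hp : p ∈ Module.support R M := Module.mem_support_iff_of_finite.2 <|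
      Ideal.mk_ker.ge.trans (Ideal.comap_mono bot_le)
    have hIp : p.asIdeal.map π = I :=
      Ideal.map_comap_of_surjective π Ideal.Quotient.mk_surjective I
    have hmax :=
      Ideal.map_eq_top_or_isMaximal_of_surjective π Ideal.Quotient.mk_surjective (h p hp)
    rw [hIp] at hmax
    exact hmax.resolve_left hI.ne_top
  have : IsArtinianRing (R ⧸ Module.annihilator R M) :=
    isArtinianRing_iff_isNoetherianRing_krullDimLE_zero.2 ⟨inferInstance, this⟩
  let := Module.quotientAnnihilator (R := R) (M := M)
  have : Module.Finite (R ⧸ Module.annihilator R M) M :=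
    Module.Finite.of_restrictScalars_finite R _ _
  exact isArtinian_of_surjective_algebraMap (R := R ⧸ Module.annihilator R M)
    Ideal.Quotient.mk_surjective

theorem exists_primes_finite_quotSMulTop {R : Type*} [CommRing R] [IsNoetherianRing R]
    {M : Type*} [AddCommGroup M] [Module R M] (I : Ideal R) (hI : IsPowTorsion I M)
    (hsupp : ∀ p ∈ Module.support R M, p.asIdeal.IsMaximal)
    [Module.Finite R (torsionBySet R M (I : Set R))] :
    ∃ P : Finset (Ideal R), (∀ q ∈ P, q.IsPrime ∧ ¬ I ≤ q) ∧
      ∀ x : R, (∀ q ∈ P, x ∉ q) → Module.Finite R (QuotSMulTop x M) := by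
  have : IsArtinian R (torsionBySet R M (I : Set R)) :=
    isArtinian_of_isMaximal_of_mem_support fun p hp =>
      hsupp p (Module.support_subset_of_injective _ (subtype_injective _) hp)
  have := isArtinian_of_torsionBySet I hI
  obtain ⟨P, k, hP, hPk⟩ := exists_primes_torsionBySet_pow_sup_smul_eq_top (A := M) I
  refine ⟨P, hP, fun x hx => ?_⟩
  have := ((AlmostFinite.of_finite (s := 0)).torsionBySet_pow (A := M) (I := I) k).finite
  refine Module.Finite.of_surjective ((x • ⊤ : Submodule R M).mkQ ∘ₗ
    (torsionBySet R M ((I ^ k : Ideal R) : Set R)).subtype) ?_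
  rw [← LinearMap.range_eq_top, LinearMap.range_comp, range_subtype, map_mkQ_eq_top, sup_comm,
    hPk x hx]

variable {R : Type*} [CommRing R] (S : Submonoid R) {H : Type*} [AddCommGroup H] [Module R H]

theorem localized_torsionBySet {I : Ideal R} (hI : I.FG) :
    (torsionBySet R H (I : Set R)).localized S =
      torsionBySet (Localization S) (LocalizedModule S H)
        (I.map (algebraMap R (Localization S)) : Set (Localization S)) := by
  induction I, hI using fg_induction with
  | singleton x =>
    rw [Ideal.map_span, Set.image_singleton, torsionBySet_span_singleton_eq,
      torsionBySet_span_singleton_eq]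
    refine (LinearMap.localized'_ker_eq_ker_localizedMap _ S _ (LocalizedModule.mkLinearMap S H)
      (DistribSMul.toLinearMap R H x)).trans (congrArg LinearMap.ker ?_)
    ext m
    obtain ⟨⟨h, s⟩, rfl⟩ := IsLocalizedModule.mk'_surjective S (LocalizedModule.mkLinearMap S H) m
    simp only [Function.uncurry_apply_pair, LinearMap.extendScalarsOfIsLocalization_apply',
      IsLocalizedModule.map_mk', DistribSMul.toLinearMap_apply, algebraMap_smul,
      IsLocalizedModule.mk'_smul]
  | sup I J _ _ hI hJ =>
    rw [torsionBySet_sup, Ideal.map_sup, torsionBySet_sup, ← hI, ← hJ]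
    exact localized'_inf ..

theorem comap_mem_support_of_mem_support_localizedModule {p : PrimeSpectrum (Localization S)}
    (hp : p ∈ Module.support (Localization S) (LocalizedModule S H)) :
    p.comap (algebraMap R (Localization S)) ∈ Module.support R H := by
  contrapose! hp
  rw [Module.notMem_support_iff'] at hp ⊢
  intro m
  induction m using LocalizedModule.induction_on with
  | h h s =>
    obtain ⟨r, hr, hrh⟩ := hp h
    refine ⟨_, hr, ?_⟩
    rw [algebraMap_smul, LocalizedModule.smul'_mk, hrh, LocalizedModule.zero_mk]

theorem IsPowTorsion.localizedModule {R : Type*} [CommRing R] (S : Submonoid R) {H : Type*}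
    [AddCommGroup H] [Module R H] {I : Ideal R} (hH : IsPowTorsion I H) :
    IsPowTorsion (I.map (algebraMap R (Localization S))) (LocalizedModule S H) := by
  intro m
  induction m using LocalizedModule.induction_on with
  | h h s =>
    obtain ⟨k, hk⟩ := hH h
    refine ⟨k, fun r hr => ?_⟩
    rw [← mem_annihilator_span_singleton]
    refine (Ideal.map_pow (algebraMap R (Localization S)) I k ▸ Ideal.map_le_iff_le_comap.2 ?_ :
      I.map (algebraMap R (Localization S)) ^ k ≤ _) hr
    intro r hr
    rw [Ideal.mem_comap, mem_annihilator_span_singleton, algebraMap_smul, LocalizedModule.smul'_mk,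
      hk r hr, LocalizedModule.zero_mk]

theorem exists_fg_notMem_support_quotient_iff (p : PrimeSpectrum R) :
    (∃ N : Submodule R H, N.FG ∧ p ∉ Module.support R (H ⧸ N)) ↔
      Module.Finite (Localization p.asIdeal.primeCompl)
        (LocalizedModule p.asIdeal.primeCompl H) := by
  have hN (N : Submodule R H) :
      p ∉ Module.support R (H ⧸ N) ↔ N.localized p.asIdeal.primeCompl = ⊤ := by
    rw [Module.notMem_support_iff, ← Submodule.Quotient.subsingleton_iff]
    exact (localizedQuotientEquiv _ N).symm.toEquiv.subsingleton_congr
  simp only [hN]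
  constructor
  · rintro ⟨N, ⟨s, rfl⟩, hs⟩
    rw [localized, localized'_span] at hs
    exact ⟨fg_def.2 ⟨_, s.finite_toSet.image _, hs⟩⟩
  · rintro ⟨t, ht⟩
    have hmk := IsLocalizedModule.mk'_surjective p.asIdeal.primeCompl
      (LocalizedModule.mkLinearMap p.asIdeal.primeCompl H)
    choose num hnum using hmk
    classical
    refine ⟨span R (t.image fun m => (num m).1), ⟨_, rfl⟩, top_le_iff.1 (ht ▸ span_le.2 ?_)⟩
    exact fun m hm => (mem_localized' _ _ _ _ _).2
      ⟨_, subset_span (Finset.mem_image_of_mem _ hm), _, hnum m⟩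

theorem finite_localizedModule_quotSMulTop (x : R) [Module.Finite (Localization S)
    (QuotSMulTop (algebraMap R (Localization S) x) (LocalizedModule S H))] :
    Module.Finite (Localization S) (LocalizedModule S (QuotSMulTop x H)) := by
  refine Module.Finite.of_surjective (liftQ (algebraMap R (Localization S) x • ⊤)
    (LocalizedModule.map S (x • ⊤ : Submodule R H).mkQ) ?_) ?_
  · rintro _ ⟨m, -, rfl⟩
    induction m using LocalizedModule.induction_on with
    | h h s =>
      have hxh : x • (Submodule.Quotient.mk h : QuotSMulTop x H) = 0 :=
        (Submodule.Quotient.mk_eq_zero _).2 (smul_mem_pointwise_smul h x ⊤ mem_top)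
      simp [LocalizedModule.map_mk, LocalizedModule.smul'_mk, hxh]
  · rw [← LinearMap.range_eq_top, range_liftQ, LinearMap.range_eq_top]
    exact IsLocalizedModule.map_surjective S _ _ _ (mkQ_surjective _)

theorem exists_primes_exists_fg_notMem_support_quotSMulTop {R : Type*} [CommRing R]
    [IsNoetherianRing R] {I : Ideal R} {H : Type*} [AddCommGroup H] [Module R H]
    (hH : IsPowTorsion I H) (p : PrimeSpectrum R) (hsupp : ∀ q < p, q ∉ Module.support R H)
    (hT : ∃ N : Submodule R (torsionBySet R H (I : Set R)), N.FG ∧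
      p ∉ Module.support R (torsionBySet R H (I : Set R) ⧸ N)) :
    ∃ P : Finset (Ideal R), (∀ q ∈ P, q.IsPrime ∧ ¬ I ≤ q) ∧ ∀ x : R, (∀ q ∈ P, x ∉ q) →
      ∃ N : Submodule R (QuotSMulTop x H), N.FG ∧
        p ∉ Module.support R (QuotSMulTop x H ⧸ N) := by
  classical
  let Λ := Localization.AtPrime p.asIdeal
  let S := p.asIdeal.primeCompl
  rw [exists_fg_notMem_support_quotient_iff] at hT
  have : Module.Finite Λ (torsionBySet Λ (LocalizedModule S H)
      (I.map (algebraMap R Λ) : Set Λ)) := by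
    rw [← localized_torsionBySet S (IsNoetherian.noetherian I)]
    exact Module.Finite.equiv (localizedEquiv S _).symm
  obtain ⟨P, hP, hfin⟩ := exists_primes_finite_quotSMulTop (I.map (algebraMap R Λ))
    (hH.localizedModule S) fun q hq => by
      have hle : q.comap (algebraMap R Λ) ≤ p :=
        (Ideal.comap_mono (IsLocalRing.le_maximalIdeal q.2.ne_top)).trans_eq
          Localization.AtPrime.under_maximalIdeal
      have hqp := hle.eq_of_not_lt fun hlt =>
        hsupp _ hlt (comap_mem_support_of_mem_support_localizedModule S hq)
      rw [Localization.AtPrime.eq_maximalIdeal_iff_under_eq.1 (congrArg (·.asIdeal) hqp)]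
      exact IsLocalRing.maximalIdeal.isMaximal Λ
  refine ⟨P.image (Ideal.comap (algebraMap R Λ)), fun q hq => ?_, fun x hx => ?_⟩
  · obtain ⟨Q, hQ, rfl⟩ := Finset.mem_image.1 hq
    have := (hP Q hQ).1
    exact ⟨inferInstance, fun h => (hP Q hQ).2 (Ideal.map_le_iff_le_comap.2 h)⟩
  rw [exists_fg_notMem_support_quotient_iff]
  have := hfin (algebraMap R Λ x) fun Q hQ hxQ => hx _ (Finset.mem_image_of_mem _ hQ) hxQ
  exact finite_localizedModule_quotSMulTop S x

end Localization

section PrimeAvoidance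

theorem exists_mem_notMem_of_forall_not_le {R : Type*} [CommRing R] {I J : Ideal R}
    (P : Finset (Ideal R)) (hP : ∀ q ∈ P, q.IsPrime ∧ ¬ I ≤ q) (hJ : ¬ I ≤ J) :
    ∃ x ∈ I, x ∉ J ∧ ∀ q ∈ P, x ∉ q := by
  classical
  by_contra! hcon
  obtain ⟨q, hq, hle⟩ := (Ideal.subset_union_prime (s := insert J P) (f := id) J J
    fun q hq hqJ _ => (hP q (Finset.mem_of_mem_insert_of_ne hq hqJ)).1).1 fun x hx => by
      simp only [Finset.coe_insert, Set.biUnion_insert]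
      refine or_iff_not_imp_left.2 fun hxJ => ?_
      obtain ⟨q, hq, hxq⟩ := hcon x hx hxJ
      exact Set.mem_biUnion hq hxq
  rcases Finset.mem_insert.1 hq with rfl | hq
  · exact hJ hle
  · exact (hP q hq).2 hle

end PrimeAvoidance

section AlmostCofinite

open Submodule
open scoped Pointwise

theorem exists_linearMap_torsionBy_quotSMulTop_ker {R A B : Type*} [CommRing R] [AddCommGroup A]
    [Module R A] [AddCommGroup B] [Module R B] (f : A →ₗ[R] B) (hf : Function.Surjective f)
    (x : R) :
    ∃ δ : torsionBy R B x →ₗ[R] QuotSMulTop x (LinearMap.ker f),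
      ∀ b, δ b = 0 ↔ (b : B) ∈ (torsionBy R A x).map f := by
  let F : torsionBy R A x →ₗ[R] torsionBy R B x :=
    f.restrict fun a (ha : x • a = 0) => (map_smul f x a).symm.trans (by rw [ha, map_zero])
  have hexact := SnakeLemma.exact_δ'_right
    (DistribSMul.toLinearMap R (LinearMap.ker f) x) (DistribSMul.toLinearMap R A x)
    (DistribSMul.toLinearMap R B x) (LinearMap.ker f).subtype f (LinearMap.exact_subtype_ker_map f)
    (LinearMap.ker f).subtype f (LinearMap.exact_subtype_ker_map f)
    (LinearMap.ext fun a => rfl) (LinearMap.ext fun a => map_smul f x a)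
    (torsionBy R A x).subtype (LinearMap.exact_subtype_ker_map _)
    (torsionBy R B x).subtype (LinearMap.exact_subtype_ker_map _)
    (x • ⊤ : Submodule R (LinearMap.ker f)).mkQ
    (LinearMap.exact_iff.2 ((ker_mkQ _).trans (map_top _)))
    hf (subtype_injective _) F rfl (subtype_injective _)
  refine ⟨_, fun b => (hexact b).trans ⟨?_, ?_⟩⟩
  · rintro ⟨a, rfl⟩
    exact ⟨a, a.2, rfl⟩
  · rintro ⟨a, ha, hab⟩
    exact ⟨⟨a, ha⟩, Subtype.ext hab⟩

namespace AlmostFinite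

theorem of_finite_setOf_le_coheight {R : Type*} [CommRing R] {M : Type*} [AddCommGroup M]
    [Module R M] {s : ℕ}
    (hfin : {p ∈ Module.support R M | s ≤ Order.coheight p}.Finite)
    (h : ∀ p ∈ Module.support R M, s ≤ Order.coheight p →
      ∃ N : Submodule R M, N.FG ∧ p ∉ Module.support R (M ⧸ N)) : AlmostFinite R s M := by
  choose! N hN hNp using h
  refine ⟨hfin.toFinset.sup N, fg_finset_sup _ _ fun p hp => ?_, fun p hp => ?_⟩
  · obtain ⟨hpM, hps⟩ := hfin.mem_toFinset.1 hp
    exact hN p hpM hps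
  · by_contra! hps
    have hpM := Module.support_subset_of_surjective _ (mkQ_surjective _) hp
    have hle := Finset.le_sup (f := N) (hfin.mem_toFinset.2 ⟨hpM, hps⟩)
    exact hNp p hpM hps (Module.support_subset_of_surjective _ (factor_surjective hle) hp)

variable {R : Type*} [CommRing R] [IsNoetherianRing R] {M : Type*} [AddCommGroup M] [Module R M]
  {I : Ideal R} {s : ℕ}

theorem finite_setOf_le_coheight (hM : IsPowTorsion I M)
    (hsupp : ∀ p ∈ Module.support R M, Order.coheight p < (s + 1 : ℕ))
    (hT : AlmostFinite R s (torsionBySet R M (I : Set R))) :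
    {p ∈ Module.support R M | s ≤ Order.coheight p}.Finite := by
  obtain ⟨N, hN, hNs⟩ := hT
  have := Module.Finite.of_fg hN
  refine Set.Finite.of_finite_image ((Ideal.finite_minimalPrimes_of_isNoetherianRing R
    (Module.annihilator R N)).subset ?_) (fun p _ q _ h => PrimeSpectrum.ext h)
  rintro _ ⟨p, ⟨hp, hps⟩, rfl⟩
  have hpN : p ∈ Module.support R N := by
    rw [← hM.support_torsionBySet, Module.support_of_exact (LinearMap.exact_subtype_mkQ N)
      (subtype_injective N) (mkQ_surjective N)] at hp
    exact hp.resolve_right fun h => (hNs p h).not_ge hps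
  refine ⟨⟨p.2, Module.mem_support_iff_of_finite.1 hpN⟩, fun q hq hqp => ?_⟩
  by_contra hpq
  let q' : PrimeSpectrum R := ⟨q, hq.1⟩
  have hlt : q' < p := lt_of_le_not_ge hqp hpq
  have hqM : q' ∈ Module.support R M := Module.support_subset_of_injective
    ((torsionBySet R M (I : Set R)).subtype ∘ₗ N.subtype)
    ((subtype_injective _).comp (subtype_injective _)) (Module.mem_support_iff_of_finite.2 hq.2)
  refine (hsupp q' hqM).not_ge ?_
  push_cast
  exact (add_le_add_left hps 1).trans (Order.coheight_add_one_le hlt)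

theorem exists_primes_quotSMulTop (hM : IsPowTorsion I M)
    (hsupp : ∀ p ∈ Module.support R M, Order.coheight p < (s + 1 : ℕ))
    (hT : AlmostFinite R s (torsionBySet R M (I : Set R))) :
    ∃ P : Finset (Ideal R), (∀ q ∈ P, q.IsPrime ∧ ¬ I ≤ q) ∧
      ∀ x : R, (∀ q ∈ P, x ∉ q) → AlmostFinite R s (QuotSMulTop x M) := by
  classical
  have hfin := finite_setOf_le_coheight hM hsupp hT
  obtain ⟨N, hN, hNs⟩ := hT
  have hloc (p : PrimeSpectrum R) (hps : s ≤ Order.coheight p) :=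
    exists_primes_exists_fg_notMem_support_quotSMulTop hM p
      (fun q hq hqM => (hsupp q hqM).not_ge <| by
        push_cast
        exact (add_le_add_left hps 1).trans (Order.coheight_add_one_le hq))
      ⟨N, hN, fun h => (hNs p h).not_ge hps⟩
  choose! P hP hPx using hloc
  refine ⟨hfin.toFinset.biUnion P, fun q hq => ?_, fun x hx => ?_⟩
  · obtain ⟨p, hp, hq⟩ := Finset.mem_biUnion.1 hq
    exact hP p (hfin.mem_toFinset.1 hp).2 q hq
  have hsub := Module.support_subset_of_surjective _ (mkQ_surjective (x • ⊤ : Submodule R M))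
  refine of_finite_setOf_le_coheight (hfin.subset fun p hp => ⟨hsub hp.1, hp.2⟩)
    fun p hp hps => hPx p hps x fun q hq => hx q ?_
  exact Finset.mem_biUnion.2 ⟨p, hfin.mem_toFinset.2 ⟨hsub hp, hps⟩, hq⟩

theorem torsionBySet_quotient {N : Submodule R M} (hN : N.FG)
    (hT : AlmostFinite R s (torsionBySet R M (I : Set R))) :
    AlmostFinite R s (torsionBySet R (M ⧸ N) (I : Set R)) := by
  let T := torsionBySet R (M ⧸ N) (I : Set R)
  have := Module.Finite.of_fg hN
  have hcomap : AlmostFinite R s (T.comap N.mkQ) :=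
    of_smul_mem (I := I) (N := N) of_finite (fun a ha m hm => by
      rw [← Quotient.mk_eq_zero, Quotient.mk_smul]
      exact (mem_torsionBySet_iff _ _).1 hm ⟨a, ha⟩) (of_le inf_le_right hT)
  refine of_surjective (N.mkQ.restrict (q := T) fun _ h => h) ?_ hcomap
  rintro ⟨m, hm⟩
  obtain ⟨m, rfl⟩ := N.mkQ_surjective m
  exact ⟨⟨m, hm⟩, rfl⟩

end AlmostFinite

/-- An `I`-torsion module which is almost finite of level `s + 1` and whose submodule of elements
killed by `I` is almost finite of level `s`. Unlike almost finiteness of that submodule alone, this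
property passes to quotients. -/
structure AlmostCofinite {R : Type*} [CommRing R] (I : Ideal R) (s : ℕ) (M : Type*)
    [AddCommGroup M] [Module R M] : Prop where
  torsion : IsPowTorsion I M
  almostFinite : AlmostFinite R (s + 1) M
  almostFinite_torsionBySet : AlmostFinite R s (torsionBySet R M (I : Set R))

namespace AlmostCofinite

variable {R : Type*} [CommRing R] [IsNoetherianRing R] {I : Ideal R} {s : ℕ}
  {A B : Type*} [AddCommGroup A] [Module R A] [AddCommGroup B] [Module R B]

theorem of_injective (f : A →ₗ[R] B) (hf : Function.Injective f) (hB : AlmostCofinite I s B) :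
    AlmostCofinite I s A where
  torsion := hB.torsion.of_injective f hf
  almostFinite := hB.almostFinite.of_injective f hf
  almostFinite_torsionBySet := by
    refine hB.almostFinite_torsionBySet.of_injective (f.restrict fun a ha => ?_)
      fun a b h => Subtype.ext (hf (congrArg Subtype.val h))
    rw [mem_torsionBySet_iff] at ha ⊢
    intro r
    rw [← map_smul, ha, map_zero]

theorem exists_primes_almostFinite_quotSMulTop (hA : AlmostCofinite I s A) :
    ∃ P : Finset (Ideal R), (∀ q ∈ P, q.IsPrime ∧ ¬ I ≤ q) ∧
      ∀ x : R, (∀ q ∈ P, x ∉ q) → AlmostFinite R s (QuotSMulTop x A) := by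
  obtain ⟨N, hN, hsupp⟩ := hA.almostFinite
  obtain ⟨P, hP, hPx⟩ := AlmostFinite.exists_primes_quotSMulTop
    (hA.torsion.of_surjective _ N.mkQ_surjective) hsupp
    (hA.almostFinite_torsionBySet.torsionBySet_quotient hN)
  refine ⟨P, hP, fun x hx => ?_⟩
  have := Module.Finite.of_fg hN
  exact .of_exact _ _ (QuotSMulTop.map_exact x (LinearMap.exact_subtype_mkQ N) N.mkQ_surjective)
    .of_finite (hPx x hx)

theorem almostFinite_torsionBySet_of_surjective (J : Ideal R) (f : A →ₗ[R] B)
    (hf : Function.Surjective f) (hA : AlmostCofinite I s A) (hJ : ∀ x ∈ J, ∀ a : A, x • a = 0) :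
    AlmostFinite R s (torsionBySet R B (I : Set R)) := by
  induction J using WellFoundedGT.induction generalizing A B with
  | ind J ih =>
  by_cases hIJ : I ≤ J
  · have hT : torsionBySet R A (I : Set R) = ⊤ :=
      eq_top_iff.2 fun a _ => (mem_torsionBySet_iff _ _).2 fun r => hJ r (hIJ r.2) a
    have hA' := hA.almostFinite_torsionBySet
    rw [hT] at hA'
    exact .of_injective _ (subtype_injective _)
      (.of_surjective (f ∘ₗ (topEquiv : (⊤ : Submodule R A) ≃ₗ[R] A).toLinearMap)
        (hf.comp topEquiv.surjective) hA')
  obtain ⟨P, hP, hPx⟩ :=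
    (hA.of_injective (LinearMap.ker f).subtype
      (subtype_injective _)).exists_primes_almostFinite_quotSMulTop
  obtain ⟨x, hxI, hxJ, hxP⟩ := exists_mem_notMem_of_forall_not_le P hP hIJ
  have hlt : J < J ⊔ Ideal.span {x} :=
    left_lt_sup.2 fun h => hxJ (h (Ideal.mem_span_singleton_self x))
  let A₁ := torsionBy R A x
  have himage : AlmostFinite R s (torsionBySet R (A₁.map f) (I : Set R)) := by
    refine ih _ hlt (f.submoduleMap A₁) (f.submoduleMap_surjective A₁)
      (hA.of_injective A₁.subtype (subtype_injective _)) fun y hy a => Subtype.ext ?_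
    obtain ⟨j, hj, z, hz, rfl⟩ := mem_sup.1 hy
    obtain ⟨r, rfl⟩ := Ideal.mem_span_singleton'.1 hz
    exact (add_smul _ _ _).trans
      (by rw [hJ j hj, mul_smul, show x • (a : A) = 0 from a.2, smul_zero, add_zero,
        ZeroMemClass.coe_zero])
  obtain ⟨δ, hδ⟩ := exists_linearMap_torsionBy_quotSMulTop_ker f hf x
  have hle : torsionBySet R B (I : Set R) ≤ torsionBy R B x := fun b hb =>
    (mem_torsionBySet_iff _ _).1 hb ⟨x, hxI⟩
  refine .of_exact ((A₁.map f).subtype.restrict fun b hb => ?_) (δ ∘ₗ inclusion hle)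
    (fun b => (hδ _).trans ⟨fun hb => ?_, ?_⟩) himage (hPx x hxP)
  · rw [mem_torsionBySet_iff] at hb ⊢
    exact fun r => congrArg Subtype.val (hb r)
  · refine ⟨⟨⟨b, hb⟩, (mem_torsionBySet_iff _ _).2 fun r => Subtype.ext ?_⟩, rfl⟩
    exact (mem_torsionBySet_iff _ _).1 b.2 r
  · rintro ⟨c, rfl⟩
    exact c.1.2

theorem of_surjective (f : A →ₗ[R] B) (hf : Function.Surjective f) (hA : AlmostCofinite I s A) :
    AlmostCofinite I s B where
  torsion := hA.torsion.of_surjective f hf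
  almostFinite := hA.almostFinite.of_surjective f hf
  almostFinite_torsionBySet := almostFinite_torsionBySet_of_surjective ⊥ f hf hA fun x hx a => by
    rw [(mem_bot R).1 hx, zero_smul]

end AlmostCofinite

end AlmostCofinite

section Finite

theorem moduleFinite_of_exact {R A B C : Type*} [CommRing R] [IsNoetherianRing R] [AddCommGroup A]
    [Module R A] [AddCommGroup B] [Module R B] [AddCommGroup C] [Module R C] [Module.Finite R A]
    [Module.Finite R C] (f : A →ₗ[R] B) (g : B →ₗ[R] C) (hfg : Function.Exact f g) :
    Module.Finite R B :=
  (AlmostFinite.of_exact f g hfg .of_finite .of_finite).finite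

theorem exists_surjective_quotient_pi {R : Type*} [CommRing R] {I : Ideal R} {N : Type*}
    [AddCommGroup N] [Module R N] [Module.Finite R N] (hN : I ≤ Module.annihilator R N) :
    ∃ (c : ℕ) (f : (Fin c → R ⧸ I) →ₗ[R] N), Function.Surjective f := by
  have htors := (Module.isTorsionBySet_iff_subset_annihilator R N).2 hN
  let := htors.module
  have : IsScalarTower R (R ⧸ I) N := htors.isScalarTower
  have := Module.Finite.of_restrictScalars_finite R (R ⧸ I) N
  obtain ⟨c, f, hf⟩ := Module.Finite.exists_fin' (R ⧸ I) N
  exact ⟨c, f.restrictScalars R, hf⟩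

end Finite

section DerivedHom

open DerivedCategory Pretriangulated Opposite

variable {R : Type u} [CommRing R] [HasDerivedCategory.{w} (ModuleCat.{u} R)]

/-- The `R`-module of morphisms of degree `i` from the module `N` to the object `X` of the derived
category; for `X` a module this is `Ext^i_R(N, X)`. -/
abbrev DerivedHom (N : ModuleCat.{u} R) (X : DerivedCategory (ModuleCat.{u} R)) (i : ℤ) :
    Type w :=
  (singleFunctor (ModuleCat.{u} R) 0).obj N ⟶ X⟦i⟧

namespace DerivedHom

variable {N N' : ModuleCat.{u} R} {X : DerivedCategory (ModuleCat.{u} R)} {i j : ℤ}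

/-- Functoriality of `DerivedHom` in the module argument, as an `R`-linear map. -/
noncomputable def precomp (f : N ⟶ N') (X : DerivedCategory (ModuleCat.{u} R)) (i : ℤ) :
    DerivedHom N' X i →ₗ[R] DerivedHom N X i :=
  Linear.leftComp R _ ((singleFunctor (ModuleCat.{u} R) 0).map f)

theorem precomp_apply (f : N ⟶ N') (e : DerivedHom N' X i) :
    precomp f X i e = (singleFunctor (ModuleCat.{u} R) 0).map f ≫ e := rfl

theorem precomp_comp_apply {N'' : ModuleCat.{u} R} (f : N ⟶ N') (g : N' ⟶ N'')
    (e : DerivedHom N'' X i) : precomp (f ≫ g) X i e = precomp f X i (precomp g X i e) := by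
  simp [precomp_apply]

theorem precomp_id_apply (e : DerivedHom N X i) : precomp (𝟙 N) X i e = e := by
  simp [precomp_apply]

theorem precomp_smul_apply (r : R) (f : N ⟶ N') (e : DerivedHom N' X i) :
    precomp (r • f) X i e = r • precomp f X i e := by
  rw [precomp_apply, Functor.map_smul, Linear.smul_comp, precomp_apply]

theorem precomp_sum_apply {ι : Type*} (s : Finset ι) (f : ι → (N ⟶ N')) (e : DerivedHom N' X i) :
    precomp (∑ a ∈ s, f a) X i e = ∑ a ∈ s, precomp (f a) X i e := by
  simp [precomp_apply, Functor.map_sum, Preadditive.sum_comp]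

theorem annihilator_le (N : ModuleCat.{u} R) (X : DerivedCategory (ModuleCat.{u} R)) (i : ℤ) :
    Module.annihilator R N ≤ Module.annihilator R (DerivedHom N X i) := fun r hr =>
  Module.mem_annihilator.2 fun e => by
    have h : r • 𝟙 N = 0 := by
      ext n
      exact Module.mem_annihilator.1 hr n
    rw [← precomp_id_apply e, ← precomp_smul_apply, h]
    simp [precomp_apply]

theorem precomp_eq_zero_of_smul_eq_zero {c : ℕ} (f : ModuleCat.of R (Fin c → R) ⟶ ModuleCat.of R R)
    (e : DerivedHom (ModuleCat.of R R) X i) (he : ∀ x, (f x : R) • e = 0) :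
    precomp f X i e = 0 := by
  have hf : f = ∑ a : Fin c, (f (Pi.single a 1) : R) •
      (ModuleCat.ofHom (LinearMap.proj a) : ModuleCat.of R (Fin c → R) ⟶ ModuleCat.of R R) := by
    ext a
    simp [ModuleCat.hom_sum, Pi.single_apply]
  rw [hf, precomp_sum_apply]
  exact Finset.sum_eq_zero fun a _ => by rw [precomp_smul_apply, ← map_smul, he, map_zero]

theorem exact_precomp {S : ShortComplex (ModuleCat.{u} R)} (hS : S.ShortExact)
    (X : DerivedCategory (ModuleCat.{u} R)) (i : ℤ) :
    Function.Exact (precomp S.g X i) (precomp S.f X i) := fun e => by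
  refine ⟨fun he => ?_, ?_⟩
  · obtain ⟨e', h⟩ := Triangle.yoneda_exact₂ _ hS.singleTriangle_distinguished e he
    exact ⟨e', h.symm⟩
  · rintro ⟨e, rfl⟩
    rw [← precomp_comp_apply, S.zero]
    simp [precomp_apply]

theorem exists_ker_precomp_le_range {S : ShortComplex (ModuleCat.{u} R)} (hS : S.ShortExact)
    (X : DerivedCategory (ModuleCat.{u} R)) (hij : i + 1 = j) :
    ∃ δ : DerivedHom S.X₁ X i →ₗ[R] DerivedHom S.X₃ X j,
      LinearMap.ker (precomp S.g X j) ≤ LinearMap.range δ := by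
  let shift := shiftFunctor (DerivedCategory (ModuleCat.{u} R)) (1 : ℤ)
  let φ : X⟦j⟧ ≅ (X⟦i⟧)⟦(1 : ℤ)⟧ := (shiftFunctorAdd' _ i 1 j hij).app X
  refine ⟨Linear.leftComp R _ hS.singleδ ∘ₗ Linear.rightComp R _ φ.inv ∘ₗ shift.mapLinearMap R,
    fun e he => ?_⟩
  obtain ⟨e', h⟩ : ∃ e' : (((singleFunctor (ModuleCat.{u} R) 0).obj S.X₁)⟦(1 : ℤ)⟧ ⟶ X⟦j⟧),
      e = hS.singleδ ≫ e' := Triangle.yoneda_exact₃ _ hS.singleTriangle_distinguished e he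
  refine ⟨shift.preimage (e' ≫ φ.hom), ?_⟩
  change hS.singleδ ≫ shift.map (shift.preimage (e' ≫ φ.hom)) ≫ φ.inv = e
  rw [Functor.map_preimage, Category.assoc, φ.hom_inv_id, Category.comp_id, h]

variable [IsNoetherianRing R]

theorem finite_ker_precomp {S : ShortComplex (ModuleCat.{u} R)} (hS : S.ShortExact)
    (hij : i + 1 = j) [Module.Finite R (DerivedHom S.X₁ X i)] :
    Module.Finite R (LinearMap.ker (precomp S.g X j)) := by
  obtain ⟨δ, hδ⟩ := exists_ker_precomp_le_range hS X hij
  exact .of_injective (Submodule.inclusion hδ) (Submodule.inclusion_injective hδ)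

theorem finite_of_retract {ι : Type*} [Fintype ι] (f : ι → (N ⟶ N')) (g : ι → (N' ⟶ N))
    (h : ∑ a, f a ≫ g a = 𝟙 N) [Module.Finite R (DerivedHom N' X i)] :
    Module.Finite R (DerivedHom N X i) := by
  refine .of_injective (LinearMap.pi fun a => precomp (g a) X i) ?_
  refine (injective_iff_map_eq_zero _).2 fun e he => ?_
  rw [← precomp_id_apply e, ← h, precomp_sum_apply]
  exact Finset.sum_eq_zero fun a _ => by
    rw [precomp_comp_apply, show precomp (g a) X i e = 0 from congrFun he a, map_zero]

theorem finite_of_iso (φ : N ≅ N') [Module.Finite R (DerivedHom N' X i)] :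
    Module.Finite R (DerivedHom N X i) :=
  finite_of_retract (ι := Unit) (fun _ => φ.hom) (fun _ => φ.inv) (by simp)

theorem finite_pi (N : ModuleCat.{u} R) (c : ℕ) [Module.Finite R (DerivedHom N X i)] :
    Module.Finite R (DerivedHom (ModuleCat.of R (Fin c → N)) X i) := by
  refine finite_of_retract (N' := N) (fun a : Fin c => ModuleCat.ofHom (LinearMap.proj a))
    (fun a => ModuleCat.ofHom (LinearMap.single R (fun _ => N) a)) ?_
  refine ModuleCat.hom_ext (LinearMap.ext fun x => ?_)
  simp [ModuleCat.hom_sum, LinearMap.sum_apply, Finset.univ_sum_single]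

end DerivedHom

/-- The objects of the derived category without cohomology in negative degrees, expressed by the
vanishing of all morphisms of negative degree from modules. -/
def IsNonneg (X : DerivedCategory (ModuleCat.{u} R)) : Prop :=
  ∀ (N : ModuleCat.{u} R) (i : ℤ), i < 0 → Subsingleton (DerivedHom N X i)

namespace IsNonneg

open DerivedHom

variable [IsNoetherianRing R] {X : DerivedCategory (ModuleCat.{u} R)} {I : Ideal R} {t : ℤ}

theorem finite_of_le_annihilator (hX : IsNonneg X)
    (h : ∀ i ≤ t, Module.Finite R (DerivedHom (ModuleCat.of R (R ⧸ I)) X i))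
    (N : ModuleCat.{u} R) [Module.Finite R N] (hN : I ≤ Module.annihilator R N) :
    Module.Finite R (DerivedHom N X t) := by
  induction t using Int.strongRec (m := 0) generalizing N with
  | lt t ht =>
    have := hX N t ht
    infer_instance
  | ge t _ ih =>
    obtain ⟨c, f, hf⟩ := exists_surjective_quotient_pi hN
    have hK : I ≤ Module.annihilator R (LinearMap.ker f) :=
      (Ideal.annihilator_quotient.symm.trans_le (by simp [Module.annihilator_pi])).trans
        ((LinearMap.ker f).subtype.annihilator_le_of_injective (Submodule.subtype_injective _))
    have := ih (t - 1) (by lia) (fun i hi => h i (by lia)) (ModuleCat.of R (LinearMap.ker f)) hK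
    have := finite_ker_precomp (X := X) (LinearMap.shortExact_shortComplexKer hf)
      (sub_add_cancel t 1)
    have := h t le_rfl
    have := finite_pi (X := X) (i := t) (ModuleCat.of R (R ⧸ I)) c
    exact moduleFinite_of_exact _ _
      (LinearMap.exact_subtype_ker_map (precomp (ModuleCat.ofHom f) X t))

theorem finite_of_finite_self (hX : IsNonneg X)
    (h : ∀ i ≤ t, Module.Finite R (DerivedHom (ModuleCat.of R R) X i))
    (N : ModuleCat.{u} R) [Module.Finite R N] : Module.Finite R (DerivedHom N X t) := by
  refine hX.finite_of_le_annihilator (I := ⊥) (fun i hi => ?_) N bot_le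
  have := h i hi
  exact finite_of_iso (Submodule.quotEquivOfEqBot (⊥ : Ideal R) rfl).toModuleIso

theorem finite_of_le_radical_annihilator (hX : IsNonneg X)
    (h : ∀ i ≤ t, Module.Finite R (DerivedHom (ModuleCat.of R (R ⧸ I)) X i))
    (N : ModuleCat.{u} R) [Module.Finite R N] (hN : I ≤ (Module.annihilator R N).radical) :
    Module.Finite R (DerivedHom N X t) := by
  obtain ⟨k, hk⟩ := Ideal.exists_pow_le_of_le_radical_of_fg hN (IsNoetherian.noetherian I)
  clear hN
  induction k generalizing N with
  | zero => exact hX.finite_of_le_annihilator h N (le_trans (by simp) hk)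
  | succ k ih =>
    let f : N →ₗ[R] N ⧸ (I • ⊤ : Submodule R N) := Submodule.mkQ _
    have : Module.Finite R (DerivedHom (ModuleCat.of R (N ⧸ (I • ⊤ : Submodule R N))) X t) :=
      hX.finite_of_le_annihilator h _
        ((Module.isTorsionBySet_iff_subset_annihilator R _).1
          (Module.isTorsionBySet_quotient_ideal_smul N I))
    have : Module.Finite R (DerivedHom (ModuleCat.of R (LinearMap.ker f)) X t) := by
      refine ih (ModuleCat.of R (LinearMap.ker f)) fun a ha => Module.mem_annihilator.2 ?_
      rintro ⟨n, hn⟩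
      refine Subtype.ext (show a • n = 0 from ?_)
      refine Submodule.smul_induction_on (p := fun m => a • m = 0)
        ((Submodule.Quotient.mk_eq_zero _).1 hn) (fun r hr m _ => ?_) fun m m' hm hm' => ?_
      · rw [← mul_smul]
        exact Module.mem_annihilator.1 (hk (Ideal.mul_mem_mul ha hr)) m
      · rw [smul_add, hm, hm', add_zero]
    have hS := LinearMap.shortExact_shortComplexKer (f := f) (Submodule.mkQ_surjective _)
    exact moduleFinite_of_exact _ _ (exact_precomp hS X t)

theorem finite_self_of_le_radical_annihilator (hX : IsNonneg X)
    (h : ∀ i ≤ t, Module.Finite R (DerivedHom (ModuleCat.of R (R ⧸ I)) X i))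
    (hI : ∀ i ≤ t, I ≤ (Module.annihilator R (DerivedHom (ModuleCat.of R R) X i)).radical) :
    Module.Finite R (DerivedHom (ModuleCat.of R R) X t) := by
  induction t using Int.strongRec (m := 0) with
  | lt t ht =>
    have := hX (ModuleCat.of R R) t ht
    infer_instance
  | ge t _ ih =>
    let J := Module.annihilator R (DerivedHom (ModuleCat.of R R) X t)
    let q : R →ₗ[R] R ⧸ J := Submodule.mkQ _
    have : Module.Finite R (DerivedHom (ModuleCat.of R (R ⧸ J)) X t) :=
      hX.finite_of_le_radical_annihilator h _
        ((hI t le_rfl).trans_eq (congrArg _ Ideal.annihilator_quotient.symm))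
    obtain ⟨c, p, hp⟩ := Module.Finite.exists_fin' R (LinearMap.ker q)
    have : Module.Finite R (DerivedHom (ModuleCat.of R (LinearMap.ker p)) X (t - 1)) :=
      hX.finite_of_finite_self (fun j hj => ih j (by lia) (fun i hi => h i (by lia))
        fun i hi => hI i (by lia)) _
    have := finite_ker_precomp (X := X) (LinearMap.shortExact_shortComplexKer hp)
      (sub_add_cancel t 1)
    let restrict := (precomp q.shortComplexKer.f X t).codRestrict
      (LinearMap.ker (precomp p.shortComplexKer.g X t)) fun e => by
        rw [LinearMap.mem_ker, ← precomp_comp_apply]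
        refine precomp_eq_zero_of_smul_eq_zero _ e fun x => Module.mem_annihilator.1 ?_ e
        exact (Submodule.Quotient.mk_eq_zero J).1 (p x).2
    have hS := LinearMap.shortExact_shortComplexKer (f := q) (Submodule.mkQ_surjective _)
    exact moduleFinite_of_exact (precomp q.shortComplexKer.g X t) restrict fun e =>
      Subtype.ext_iff.trans (exact_precomp hS X t e)

end IsNonneg

namespace DerivedHom

theorem isNonneg_singleFunctor (M : ModuleCat.{u} R) :
    IsNonneg ((singleFunctor (ModuleCat.{u} R) 0).obj M) := by
  intro N i hi
  have := TStructure.t.isGE_shift ((singleFunctor (ModuleCat.{u} R) 0).obj M) 0 i (-i)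
  exact ⟨fun f g => sub_eq_zero.1 (TStructure.t.zero (f - g) 0 (-i))⟩

/-- The identification of morphisms of degree `n` between two modules with extensions. -/
noncomputable def extEquiv (N M : ModuleCat.{u} R) (n : ℕ) :
    DerivedHom N ((singleFunctor (ModuleCat.{u} R) 0).obj M) n ≃ₗ[R] Abelian.Ext N M n :=
  Abelian.Ext.homLinearEquiv.symm

theorem subsingleton_self (M : ModuleCat.{u} R) {i : ℤ} (hi : i ≠ 0) :
    Subsingleton (DerivedHom (ModuleCat.of R R) ((singleFunctor (ModuleCat.{u} R) 0).obj M) i) := by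
  obtain hi' | hi' := lt_or_gt_of_ne hi
  · exact isNonneg_singleFunctor M _ i hi'
  · obtain ⟨n, rfl⟩ : ∃ n : ℕ, i = (n + 1 : ℕ) := ⟨i.toNat - 1, by lia⟩
    have : Subsingleton (Abelian.Ext (ModuleCat.of R R) M (n + 1)) :=
      subsingleton_of_forall_eq 0 Abelian.Ext.eq_zero_of_projective
    exact (extEquiv (ModuleCat.of R R) M (n + 1)).injective.subsingleton

/-- The identification of morphisms of degree `0` from the ring to a module with the module. -/
noncomputable def selfEquiv (M : ModuleCat.{u} R) :
    DerivedHom (ModuleCat.of R R) ((singleFunctor (ModuleCat.{u} R) 0).obj M) 0 ≃ₗ[R] M :=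
  extEquiv (ModuleCat.of R R) M 0 ≪≫ₗ Abelian.Ext.linearEquiv₀ ≪≫ₗ
    ModuleCat.homLinearEquiv ≪≫ₗ LinearMap.ringLmapEquivSelf R R M

end DerivedHom

end DerivedHom

section Annihilator

theorem annihilator_mul_annihilator_le_of_exact {R A B C : Type*} [CommRing R] [AddCommGroup A]
    [Module R A] [AddCommGroup B] [Module R B] [AddCommGroup C] [Module R C] (f : A →ₗ[R] B)
    (g : B →ₗ[R] C) (hfg : Function.Exact f g) :
    Module.annihilator R A * Module.annihilator R C ≤ Module.annihilator R B := by
  refine Ideal.mul_le.2 fun r hr s hs => Module.mem_annihilator.2 fun b => ?_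
  obtain ⟨a, ha⟩ := (hfg (s • b)).1 (by rw [map_smul, Module.mem_annihilator.1 hs])
  rw [mul_smul, ← ha, ← map_smul, Module.mem_annihilator.1 hr, map_zero]

end Annihilator

section SMulFiber

open DerivedHom DerivedCategory Pretriangulated Opposite Submodule
open scoped Pointwise

variable {R : Type u} [CommRing R] [HasDerivedCategory.{w} (ModuleCat.{u} R)]

/-- `Z` is a homotopy fiber of multiplication by `x` on `X`, that is, `X ⊗ K(x)` up to a shift,
where `K(x)` is the Koszul complex of `x`. -/
def IsSMulFiber (x : R) (X Z : DerivedCategory (ModuleCat.{u} R)) : Prop :=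
  ∃ (f : Z ⟶ X) (h : X ⟶ Z⟦(1 : ℤ)⟧), Triangle.mk f (x • 𝟙 X) h ∈ distTriang _

theorem exists_isSMulFiber (x : R) (X : DerivedCategory (ModuleCat.{u} R)) :
    ∃ Z, IsSMulFiber x X Z :=
  distinguished_cocone_triangle₁ (x • 𝟙 X)

namespace IsSMulFiber

variable {X Z : DerivedCategory (ModuleCat.{u} R)} {x : R} {i j : ℤ}

theorem exists_exact (hZ : IsSMulFiber x X Z) (N : ModuleCat.{u} R) (hij : i + 1 = j) :
    ∃ (δ : DerivedHom N X i →ₗ[R] DerivedHom N Z j) (ρ : DerivedHom N Z j →ₗ[R] DerivedHom N X j),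
      Function.Exact (LinearMap.lsmul R _ x) δ ∧ Function.Exact δ ρ ∧
        Function.Exact ρ (LinearMap.lsmul R _ x) := by
  obtain ⟨f, h, hT⟩ := hZ
  let A := (singleFunctor (ModuleCat.{u} R) 0).obj N
  let F := preadditiveCoyoneda.obj (op A)
  let δ : DerivedHom N X i →ₗ[R] DerivedHom N Z j :=
    Linear.rightComp R _ (h⟦i⟧' ≫ (shiftFunctorAdd' _ 1 i j (by lia)).inv.app Z)
  let ρ : DerivedHom N Z j →ₗ[R] DerivedHom N X j := Linear.rightComp R _ (f⟦j⟧')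
  have hsmul (k : ℤ) (e : DerivedHom N X k) :
      LinearMap.lsmul R (DerivedHom N X k) x e = e ≫ (x • 𝟙 X)⟦k⟧' := by
    rw [Functor.map_smul, CategoryTheory.Functor.map_id, Linear.comp_smul, Category.comp_id,
      LinearMap.lsmul_apply]
  have hδ (e : DerivedHom N X i) :
      F.homologySequenceδ (Triangle.mk f (x • 𝟙 X) h) i j hij e = δ e :=
    preadditiveCoyoneda_homologySequenceδ_apply (A := op A) (Triangle.mk f (x • 𝟙 X) h) i j hij e
  have h₁ := (ShortComplex.ab_exact_iff_function_exact _).1 (F.homologySequence_exact₃ _ hT i j hij)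
  have h₂ := (ShortComplex.ab_exact_iff_function_exact _).1 (F.homologySequence_exact₁ _ hT i j hij)
  have h₃ := (ShortComplex.ab_exact_iff_function_exact _).1 (F.homologySequence_exact₂ _ hT j)
  refine ⟨δ, ρ, fun e => ?_, fun e => ?_, fun e => ?_⟩
  · simp only [Set.mem_range, hsmul, ← hδ]
    exact h₁ e
  · simp only [Set.mem_range, ← hδ]
    exact h₂ e
  · rw [hsmul]
    exact h₃ e

theorem exists_exact_quotSMulTop_torsionBy (hZ : IsSMulFiber x X Z) (N : ModuleCat.{u} R)
    (hij : i + 1 = j) :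
    ∃ (δ : QuotSMulTop x (DerivedHom N X i) →ₗ[R] DerivedHom N Z j)
      (ρ : DerivedHom N Z j →ₗ[R] torsionBy R (DerivedHom N X j) x),
      Function.Exact δ ρ ∧ Function.Surjective ρ := by
  obtain ⟨δ, ρ, hδ, hδρ, hρ⟩ := hZ.exists_exact N hij
  refine ⟨liftQ _ δ ?_, ρ.codRestrict _ fun z => (hρ _).2 ⟨z, rfl⟩, fun z => ?_, ?_⟩
  · rintro _ ⟨e, -, rfl⟩
    exact (hδ _).2 ⟨e, rfl⟩
  · refine Subtype.ext_iff.trans ((hδρ z).trans ?_)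
    rw [← LinearMap.coe_range, ← LinearMap.coe_range, range_liftQ]
  · rintro ⟨e, he⟩
    obtain ⟨z, hz⟩ := (hρ e).1 he
    exact ⟨z, Subtype.ext hz⟩

theorem subsingleton (hZ : IsSMulFiber x X Z) (N : ModuleCat.{u} R) (hij : i + 1 = j)
    [Subsingleton (DerivedHom N X i)] [Subsingleton (DerivedHom N X j)] :
    Subsingleton (DerivedHom N Z j) := by
  obtain ⟨δ, ρ, -, hδρ, -⟩ := hZ.exists_exact N hij
  refine subsingleton_of_forall_eq 0 fun z => ?_
  obtain ⟨e, rfl⟩ := (hδρ z).1 (Subsingleton.elim _ _)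
  rw [Subsingleton.elim e 0, map_zero]

theorem finite_base (hZ : IsSMulFiber x X Z) (N : ModuleCat.{u} R)
    (hx : x ∈ Module.annihilator R N) [Module.Finite R (DerivedHom N Z i)] :
    Module.Finite R (DerivedHom N X i) := by
  obtain ⟨-, ρ, -, -, hρ⟩ := hZ.exists_exact N (sub_add_cancel i 1)
  exact .of_surjective ρ fun e => (hρ e).1 (Module.mem_annihilator.1 (annihilator_le N X i hx) e)

theorem le_radical_annihilator (hZ : IsSMulFiber x X Z) (N : ModuleCat.{u} R) (hij : i + 1 = j)
    {J : Ideal R} (hi : J ≤ (Module.annihilator R (DerivedHom N X i)).radical)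
    (hj : J ≤ (Module.annihilator R (DerivedHom N X j)).radical) :
    J ⊔ Ideal.span {x} ≤ (Module.annihilator R (DerivedHom N Z j)).radical := by
  obtain ⟨δ, ρ, hδρ, -⟩ := hZ.exists_exact_quotSMulTop_torsionBy N hij
  refine le_trans ?_ (Ideal.radical_mono (annihilator_mul_annihilator_le_of_exact δ ρ hδρ))
  rw [Ideal.radical_mul, sup_le_iff, Ideal.span_singleton_le_iff_mem]
  refine ⟨le_inf (hi.trans (Ideal.radical_mono ?_)) (hj.trans (Ideal.radical_mono ?_)),
    Ideal.le_radical ?_, Ideal.le_radical ?_⟩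
  · exact (mkQ _).annihilator_le_of_surjective (mkQ_surjective _)
  · exact (Submodule.subtype _).annihilator_le_of_injective (subtype_injective _)
  · refine Module.mem_annihilator.2 ((mkQ_surjective _).forall.2 fun e => ?_)
    exact (Quotient.mk_eq_zero _).2 (smul_mem_pointwise_smul e x ⊤ mem_top)
  · exact Module.mem_annihilator.2 fun e => Subtype.ext e.2

variable [IsNoetherianRing R]

theorem finite (hZ : IsSMulFiber x X Z) (N : ModuleCat.{u} R) (hij : i + 1 = j)
    [Module.Finite R (DerivedHom N X i)] [Module.Finite R (DerivedHom N X j)] :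
    Module.Finite R (DerivedHom N Z j) := by
  obtain ⟨δ, ρ, -, hδρ, -⟩ := hZ.exists_exact N hij
  exact moduleFinite_of_exact δ ρ hδρ

theorem almostFinite (hZ : IsSMulFiber x X Z) (N : ModuleCat.{u} R) (hij : i + 1 = j) {s : ℕ}
    (hi : AlmostFinite R s (QuotSMulTop x (DerivedHom N X i)))
    (hj : AlmostFinite R s (DerivedHom N X j)) : AlmostFinite R s (DerivedHom N Z j) := by
  obtain ⟨δ, ρ, hδρ, -⟩ := hZ.exists_exact_quotSMulTop_torsionBy N hij
  exact .of_exact δ ρ hδρ hi (hj.of_injective _ (subtype_injective _))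

end IsSMulFiber

end SMulFiber

section KoszulLike

open DerivedHom DerivedCategory Submodule

theorem AlmostFinite.exists_primes_almostFinite_quotSMulTop {R A : Type*} [CommRing R]
    [IsNoetherianRing R] [AddCommGroup A] [Module R A] {I : Ideal R} {s : ℕ}
    (hA : AlmostFinite R s A) (hI : 0 < s → AlmostCofinite I (s - 1) A) :
    ∃ P : Finset (Ideal R), (∀ q ∈ P, q.IsPrime ∧ ¬ I ≤ q) ∧
      ∀ x : R, (∀ q ∈ P, x ∉ q) → AlmostFinite R (s - 1) (QuotSMulTop x A) := by
  cases s with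
  | zero => exact ⟨∅, by simp, fun x _ => hA.of_surjective _ (mkQ_surjective _)⟩
  | succ s => exact (hI s.succ_pos).exists_primes_almostFinite_quotSMulTop

variable {R : Type u} [CommRing R] [HasDerivedCategory.{w} (ModuleCat.{u} R)]

/-- The properties shared by an `𝔞`-torsion module `M` with `Ext^i_R(R/𝔞, M)` finitely generated
for `i < d` and all objects obtained from it by successively taking homotopy fibers of
multiplication by elements of `𝔞`. The ideal `J` records the elements already used, which act
nilpotently on cohomology. -/
structure IsKoszulLike (𝔞 : Ideal R) (d : ℕ) (J : Ideal R)
    (X : DerivedCategory (ModuleCat.{u} R)) : Prop where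
  isNonneg : IsNonneg X
  torsion : ∀ i, IsPowTorsion 𝔞 (DerivedHom (ModuleCat.of R R) X i)
  finite : ∀ i < (d : ℤ), Module.Finite R (DerivedHom (ModuleCat.of R (R ⧸ 𝔞)) X i)
  le_radical : ∀ i, J ≤ (Module.annihilator R (DerivedHom (ModuleCat.of R R) X i)).radical

namespace IsKoszulLike

variable [IsNoetherianRing R] {𝔞 J : Ideal R} {d : ℕ} {X Z : DerivedCategory (ModuleCat.{u} R)}
  {x : R}

theorem of_isSMulFiber (hX : IsKoszulLike 𝔞 d J X) (hZ : IsSMulFiber x X Z) :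
    IsKoszulLike 𝔞 d (J ⊔ Ideal.span {x}) Z where
  isNonneg N i hi := by
    have := hX.isNonneg N (i - 1) (by lia)
    have := hX.isNonneg N i hi
    exact hZ.subsingleton N (sub_add_cancel i 1)
  torsion i := by
    obtain ⟨δ, ρ, -, hδρ, -⟩ := hZ.exists_exact (ModuleCat.of R R) (sub_add_cancel i 1)
    exact .of_exact δ ρ hδρ (hX.torsion _) (hX.torsion _)
  finite i hi := by
    have := hX.finite (i - 1) (by lia)
    have := hX.finite i hi
    exact hZ.finite _ (sub_add_cancel i 1)
  le_radical i := hZ.le_radical_annihilator _ (sub_add_cancel i 1) (hX.le_radical _)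
    (hX.le_radical _)

theorem finite_self (hX : IsKoszulLike 𝔞 d J X) (hJ : 𝔞 ≤ J) {i : ℤ} (hi : i < d) :
    Module.Finite R (DerivedHom (ModuleCat.of R R) X i) :=
  hX.isNonneg.finite_self_of_le_radical_annihilator (fun j hj => hX.finite j (by lia))
    fun j _ => hJ.trans (hX.le_radical j)

theorem finite_of_finite_self (hX : IsKoszulLike 𝔞 d J X) (hJ : 𝔞 ≤ J) {i : ℤ}
    (h : ∀ j ≤ i, (d : ℤ) ≤ j → Module.Finite R (DerivedHom (ModuleCat.of R R) X j)) :
    Module.Finite R (DerivedHom (ModuleCat.of R (R ⧸ 𝔞)) X i) :=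
  hX.isNonneg.finite_of_finite_self
    (fun j hj => (lt_or_ge j (d : ℤ)).elim (hX.finite_self hJ) (h j hj)) _

theorem exists_isSMulFiber {l : ℕ} (hX : IsKoszulLike 𝔞 d J X)
    (hS : ∀ i : ℕ, i ≤ l → AlmostFinite R (d - i) (DerivedHom (ModuleCat.of R R) X i))
    (hC : ∀ i : ℕ, i < l → i < d →
      AlmostCofinite 𝔞 (d - i - 1) (DerivedHom (ModuleCat.of R R) X i)) (hJ : ¬ 𝔞 ≤ J) :
    ∃ x ∈ 𝔞, J < J ⊔ Ideal.span {x} ∧ ∃ Z, IsSMulFiber x X Z ∧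
      ∀ i : ℕ, i ≤ l → AlmostFinite R (d - i) (DerivedHom (ModuleCat.of R R) Z i) := by
  classical
  choose! P hP hPx using fun i (hi : i < l) =>
    (hS i hi.le).exists_primes_almostFinite_quotSMulTop fun hd => hC i hi (Nat.sub_pos_iff_lt.1 hd)
  obtain ⟨x, hx, hxJ, hxP⟩ := exists_mem_notMem_of_forall_not_le ((Finset.range l).biUnion P)
    (fun q hq => by
      obtain ⟨i, hi, hq⟩ := Finset.mem_biUnion.1 hq
      exact hP i (Finset.mem_range.1 hi) q hq) hJ
  obtain ⟨Z, hZ⟩ := _root_.exists_isSMulFiber x X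
  refine ⟨x, hx, left_lt_sup.2 fun h => hxJ (h (Ideal.mem_span_singleton_self x)), Z, hZ,
    fun i hi => ?_⟩
  cases i with
  | zero =>
    have := hX.isNonneg (ModuleCat.of R R) (-1) (by lia)
    exact hZ.almostFinite (i := -1) _ (by lia) .of_finite (hS 0 hi)
  | succ i =>
    refine hZ.almostFinite (i := i) _ (by lia) ?_ (hS (i + 1) hi)
    exact hPx i hi x fun q hq => hxP q (Finset.mem_biUnion.2 ⟨i, Finset.mem_range.2 hi, hq⟩)

theorem almostCofinite {l : ℕ} (hX : IsKoszulLike 𝔞 d J X)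
    (hS : ∀ i : ℕ, i ≤ l → AlmostFinite R (d - i) (DerivedHom (ModuleCat.of R R) X i))
    (hl : l < d) : AlmostCofinite 𝔞 (d - l - 1) (DerivedHom (ModuleCat.of R R) X l) := by
  induction l using Nat.strong_induction_on generalizing J X with
  | h l ihl =>
  induction J using WellFoundedGT.induction generalizing X with
  | ind J ihJ =>
  refine ⟨hX.torsion l, ?_, ?_⟩
  · rw [Nat.sub_add_cancel (Nat.sub_pos_of_lt hl)]
    exact hS l le_rfl
  by_cases hJ : 𝔞 ≤ J
  · have := hX.finite_self hJ (i := l) (by lia)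
    exact .of_finite
  obtain ⟨x, hx, hlt, Z, hZ, hZS⟩ := hX.exists_isSMulFiber hS
    (fun i hil => ihl i hil hX fun j hj => hS j (by lia)) hJ
  obtain ⟨-, ρ, -, hρ⟩ := hZ.exists_exact_quotSMulTop_torsionBy (ModuleCat.of R R)
    (sub_add_cancel (l : ℤ) 1)
  have htors := (ihJ _ hlt (hX.of_isSMulFiber hZ) hZS).of_surjective ρ hρ
  have hle : torsionBySet R (DerivedHom (ModuleCat.of R R) X l) (𝔞 : Set R) ≤ torsionBy R _ x :=
    fun e he => (mem_torsionBySet_iff _ _).1 he ⟨x, hx⟩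
  refine htors.almostFinite_torsionBySet.of_injective
    ((Submodule.inclusion hle).codRestrict _ fun e => (mem_torsionBySet_iff _ _).2 fun a =>
      Subtype.ext ((mem_torsionBySet_iff _ _).1 e.2 a))
    fun a b h => Subtype.ext (congrArg (fun e => e.1.1) h)

theorem finite_of_almostFinite {l : ℕ} (hX : IsKoszulLike 𝔞 d J X)
    (hS : ∀ i : ℕ, i ≤ l → AlmostFinite R (d - i) (DerivedHom (ModuleCat.of R R) X i)) :
    Module.Finite R (DerivedHom (ModuleCat.of R (R ⧸ 𝔞)) X l) := by
  induction J using WellFoundedGT.induction generalizing X with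
  | ind J ih =>
  by_cases hJ : 𝔞 ≤ J
  · refine hX.finite_of_finite_self hJ fun j hj hjd => ?_
    lift j to ℕ using by lia
    have := hS j (by lia)
    rw [Nat.sub_eq_zero_of_le (by lia)] at this
    exact this.finite
  · obtain ⟨x, hx, hlt, Z, hZ, hZS⟩ := hX.exists_isSMulFiber hS
      (fun i hil hid => hX.almostCofinite (fun j hj => hS j (by lia)) hid) hJ
    have := ih _ hlt (hX.of_isSMulFiber hZ) hZS
    exact hZ.finite_base _ (Ideal.annihilator_quotient.ge hx)

theorem finite_of_card_lt (S : Finset R) {s : ℤ} (hX : IsKoszulLike 𝔞 d J X)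
    (hs : ∀ i > s, Subsingleton (DerivedHom (ModuleCat.of R R) X i)) (hsd : s + S.card < d)
    (hS : ∀ x ∈ S, x ∈ 𝔞) (hJ : 𝔞 ≤ J ⊔ Ideal.span S) (i : ℤ) :
    Module.Finite R (DerivedHom (ModuleCat.of R (R ⧸ 𝔞)) X i) := by
  classical
  induction S using Finset.induction generalizing s J X with
  | empty =>
    refine hX.finite_of_finite_self (by simpa using hJ) fun j _ hj => ?_
    have := hs j (by simp only [Finset.card_empty] at hsd; lia)
    infer_instance
  | insert x S hxS ih =>
    obtain ⟨Z, hZ⟩ := _root_.exists_isSMulFiber x X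
    have := ih (s := s + 1) (hX.of_isSMulFiber hZ) (fun j hj => ?_)
      (by rw [Finset.card_insert_of_notMem hxS] at hsd; lia)
      (fun y hy => hS y (Finset.mem_insert_of_mem hy))
      (by rwa [sup_assoc, ← Ideal.span_insert, ← Finset.coe_insert])
    · exact hZ.finite_base _ (Ideal.annihilator_quotient.ge (hS x (S.mem_insert_self x)))
    · have := hs (j - 1) (by lia)
      have := hs j (by lia)
      exact hZ.subsingleton _ (sub_add_cancel j 1)

end IsKoszulLike

end KoszulLike

section KrullDimension

open Submodule

variable {R : Type*} [CommRing R] {d : ℕ}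

theorem asIdeal_mem_minimalPrimes_of_le_coheight (hR : ringKrullDim R ≤ d) {p : PrimeSpectrum R}
    (hp : d ≤ Order.coheight p) : p.asIdeal ∈ minimalPrimes R := by
  have hle (q : PrimeSpectrum R) : Order.coheight q ≤ d :=
    WithBot.coe_le_coe.1 ((Order.coheight_le_krullDim q).trans hR)
  rw [← PrimeSpectrum.isMin_iff]
  by_contra hmin
  obtain ⟨q, hq⟩ := not_isMin_iff.1 hmin
  exact (Order.coheight_strictAnti hq ((hle p).trans_lt (ENat.natCast_lt_top d))).not_ge
    ((hle q).trans hp)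

theorem coheight_le_ringKrullDim_quotient {I : Ideal R} (p : PrimeSpectrum R)
    (hp : I ≤ p.asIdeal) : (Order.coheight p : WithBot ℕ∞) ≤ ringKrullDim (R ⧸ I) := by
  rw [Order.coheight_eq_krullDim_Ici, ringKrullDim_quotient]
  exact Order.krullDim_le_of_strictMono
    (fun q : Set.Ici p => (⟨q.1, hp.trans q.2⟩ : PrimeSpectrum.zeroLocus (I : Set R)))
    fun _ _ h => h

variable [IsNoetherianRing R] (I : Ideal R)

theorem exists_pow_mul_eq_bot :
    ∃ (k : ℕ) (J : Ideal R), I ^ k * J = ⊥ ∧ ∀ p ∈ minimalPrimes R, I ≤ p → ¬ J ≤ p := by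
  classical
  have hfin := (⊥ : Ideal R).finite_minimalPrimes_of_isNoetherianRing
  let P := hfin.toFinset.filter (¬ I ≤ ·)
  let J := P.inf id
  have hIJ : I * J ≤ (⊥ : Ideal R).radical := by
    rw [← Ideal.sInf_minimalPrimes]
    refine le_sInf fun p hp => ?_
    by_cases hIp : I ≤ p
    · exact Ideal.mul_le_left.trans hIp
    · refine Ideal.mul_le_right.trans (Finset.inf_le (f := id) ?_)
      exact Finset.mem_filter.2 ⟨hfin.mem_toFinset.2 hp, hIp⟩
  obtain ⟨k, hk⟩ := Ideal.exists_pow_le_of_le_radical_of_fg hIJ (IsNoetherian.noetherian _)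
  refine ⟨k, J ^ k, by rwa [← mul_pow, ← le_bot_iff], fun p hp hIp hJp => ?_⟩
  obtain ⟨q, hq, hqp⟩ := hp.1.1.inf_le'.1 (hp.1.1.le_of_pow_le hJp)
  obtain ⟨hq, hIq⟩ := Finset.mem_filter.1 hq
  exact hIq (hIp.trans (hp.2 (hfin.mem_toFinset.1 hq).1 hqp))

variable {I} {M : Type*} [AddCommGroup M] [Module R M]

theorem isPowTorsion_iff_support_subset_zeroLocus :
    IsPowTorsion I M ↔ Module.support R M ⊆ PrimeSpectrum.zeroLocus (I : Set R) := by
  refine ⟨fun h p hp => ?_, fun h m => ?_⟩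
  · obtain ⟨m, hm⟩ := Module.mem_support_iff_exists_annihilator.1 hp
    obtain ⟨n, hn⟩ := h m
    exact p.2.le_of_pow_le (n := n) fun a ha =>
      hm ((mem_annihilator_span_singleton m a).2 (hn a ha))
  · have hle : I ≤ (span R {m}).annihilator.radical := by
      rw [Ideal.radical_eq_sInf]
      exact le_sInf fun p hp => h (a := ⟨p, hp.2⟩)
        (Module.mem_support_iff_exists_annihilator.2 ⟨m, hp.1⟩)
    obtain ⟨n, hn⟩ := Ideal.exists_pow_le_of_le_radical_of_fg hle (IsNoetherian.noetherian I)
    exact ⟨n, fun a ha => (mem_annihilator_span_singleton m a).1 (hn ha)⟩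

namespace IsPowTorsion

theorem of_le_radical {J : Ideal R} (hJI : J ≤ I.radical) (hM : IsPowTorsion I M) :
    IsPowTorsion J M := by
  rw [isPowTorsion_iff_support_subset_zeroLocus] at hM ⊢
  refine hM.trans ?_
  rw [← PrimeSpectrum.zeroLocus_radical I]
  exact PrimeSpectrum.zeroLocus_anti_mono hJI

theorem almostFinite_of_ringKrullDim_quotient_le (hM : IsPowTorsion I M)
    (hd : ringKrullDim (R ⧸ I) ≤ d) : AlmostFinite R (d + 1) M := by
  refine ⟨⊥, fg_bot, fun p hp => ?_⟩
  have hIp := isPowTorsion_iff_support_subset_zeroLocus.1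
    (hM.of_surjective _ (mkQ_surjective ⊥)) hp
  have hle := (coheight_le_ringKrullDim_quotient p hIp).trans hd
  exact (WithBot.coe_le_coe.1 hle).trans_lt (by exact_mod_cast d.lt_succ_self)

theorem almostFinite_of_ringKrullDim_le (hM : IsPowTorsion I M) (hd : ringKrullDim R ≤ d)
    [Module.Finite R (torsionBySet R M (I : Set R))] : AlmostFinite R d M := by
  obtain ⟨k, J, hJ, hJp⟩ := exists_pow_mul_eq_bot I
  let N := torsionBySet R M ((I ^ k : Ideal R) : Set R)
  have hN : Module.Finite R N := (AlmostFinite.torsionBySet_pow (s := 0) .of_finite k).finite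
  refine ⟨N, .of_finite, fun p hp => ?_⟩
  by_contra! hpd
  have hIp := isPowTorsion_iff_support_subset_zeroLocus.1 (hM.of_surjective _ (mkQ_surjective N)) hp
  obtain ⟨r, hr, hrp⟩ := SetLike.not_le_iff_exists.1
    (hJp _ (asIdeal_mem_minimalPrimes_of_le_coheight hd hpd) hIp)
  refine Module.notMem_support_iff'.2 ((mkQ_surjective N).forall.2 fun m => ⟨r, hrp, ?_⟩) hp
  refine (Quotient.mk_eq_zero _).2 ((mem_torsionBySet_iff _ _).2 fun a => ?_)
  have har : (a : R) * r = 0 := (mem_bot R).1 (hJ ▸ Ideal.mul_mem_mul a.2 hr)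
  exact (mul_smul (a : R) r m).symm.trans (by rw [har, zero_smul])

end IsPowTorsion

end KrullDimension

section FiniteExt

open Abelian

variable {R : Type u} [CommRing R]

section Derived

variable [HasDerivedCategory.{w} (ModuleCat.{u} R)] {M : ModuleCat.{u} R} {d : ℕ}

theorem DerivedHom.finite_of_finite_ext {N : ModuleCat.{u} R}
    (h : ∀ i < d, Module.Finite R (Ext N M i)) {i : ℤ} (hi : i < d) :
    Module.Finite R
      (DerivedHom N ((DerivedCategory.singleFunctor (ModuleCat.{u} R) 0).obj M) i) := by
  obtain hneg | hnonneg := lt_or_ge i 0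
  · have := DerivedHom.isNonneg_singleFunctor M N i hneg
    infer_instance
  · lift i to ℕ using hnonneg
    have := h i (by lia)
    exact .equiv (DerivedHom.extEquiv N M i).symm

theorem isKoszulLike_singleFunctor {𝔞 : Ideal R} (hM : IsPowTorsion 𝔞 M)
    (h : ∀ i < d, Module.Finite R (Ext (ModuleCat.of R (R ⧸ 𝔞)) M i)) :
    IsKoszulLike 𝔞 d ⊥ ((DerivedCategory.singleFunctor (ModuleCat.{u} R) 0).obj M) where
  isNonneg := DerivedHom.isNonneg_singleFunctor M
  torsion i := by
    obtain rfl | hi := eq_or_ne i 0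
    · exact hM.of_injective _ (DerivedHom.selfEquiv M).injective
    · have := DerivedHom.subsingleton_self M hi
      exact fun _ => ⟨0, fun _ _ => Subsingleton.elim _ _⟩
  finite i hi := DerivedHom.finite_of_finite_ext h hi
  le_radical _ := bot_le

end Derived

theorem finite_torsionBySet_of_finite_ext_zero {I : Ideal R} [IsNoetherianRing R]
    {M : ModuleCat.{u} R} (h : Module.Finite R (Ext (ModuleCat.of R (R ⧸ I)) M 0)) :
    Module.Finite R (Submodule.torsionBySet R M (I : Set R)) := by
  have : Module.Finite R ((R ⧸ I) →ₗ[R] M) :=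
    .equiv (Ext.linearEquiv₀ ≪≫ₗ
      ModuleCat.homLinearEquiv (S := R) (M := ModuleCat.of R (R ⧸ I)) (N := M))
  let evalOne : ((R ⧸ I) →ₗ[R] M) →ₗ[R] M := LinearMap.applyₗ (Ideal.Quotient.mk I 1)
  have hle : Submodule.torsionBySet R M (I : Set R) ≤ LinearMap.range evalOne := fun m hm =>
    ⟨Submodule.liftQ I (LinearMap.toSpanSingleton R M m) fun a ha =>
      (Submodule.mem_torsionBySet_iff _ _).1 hm ⟨a, ha⟩, one_smul R m⟩
  exact .of_injective (Submodule.inclusion hle) (Submodule.inclusion_injective hle)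

variable [IsNoetherianRing R]

theorem finite_ext_of_le_radical {I J : Ideal R} (hIJ : I ≤ J.radical) {M : ModuleCat.{u} R}
    {d : ℕ} (h : ∀ i < d, Module.Finite R (Ext (ModuleCat.of R (R ⧸ I)) M i)) {n : ℕ}
    (hn : n < d) : Module.Finite R (Ext (ModuleCat.of R (R ⧸ J)) M n) := by
  let := HasDerivedCategory.standard (ModuleCat.{u} R)
  have := (DerivedHom.isNonneg_singleFunctor M).finite_of_le_radical_annihilator (t := n)
    (fun i hi => DerivedHom.finite_of_finite_ext h (by lia)) (ModuleCat.of R (R ⧸ J))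
    (hIJ.trans (Ideal.radical_mono Ideal.annihilator_quotient.ge))
  exact .equiv (DerivedHom.extEquiv _ M n)

variable {𝔞 : Ideal R} {M : ModuleCat.{u} R} {d : ℕ}

theorem AlmostFinite.finite_ext (hMd : AlmostFinite R d M) (hM : IsPowTorsion 𝔞 M)
    (h : ∀ i < d, Module.Finite R (Ext (ModuleCat.of R (R ⧸ 𝔞)) M i)) (n : ℕ) :
    Module.Finite R (Ext (ModuleCat.of R (R ⧸ 𝔞)) M n) := by
  let := HasDerivedCategory.standard (ModuleCat.{u} R)
  have := (isKoszulLike_singleFunctor hM h).finite_of_almostFinite (l := n) fun i _ => by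
    obtain rfl | hi := eq_or_ne i 0
    · exact hMd.of_injective _ (DerivedHom.selfEquiv M).injective
    · have := DerivedHom.subsingleton_self M (Nat.cast_ne_zero.2 hi)
      exact .of_finite
  exact .equiv (DerivedHom.extEquiv _ M n)

theorem finite_ext_of_card_lt (S : Finset R) (hS : S.card < d)
    (hM : IsPowTorsion (Ideal.span (S : Set R)) M)
    (h : ∀ i < d, Module.Finite R (Ext (ModuleCat.of R (R ⧸ Ideal.span (S : Set R))) M i))
    (n : ℕ) : Module.Finite R (Ext (ModuleCat.of R (R ⧸ Ideal.span (S : Set R))) M n) := by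
  let := HasDerivedCategory.standard (ModuleCat.{u} R)
  have := (isKoszulLike_singleFunctor hM h).finite_of_card_lt S (s := 0)
    (fun i hi => DerivedHom.subsingleton_self M hi.ne') (by simpa using hS)
    (fun x hx => Ideal.subset_span hx) le_sup_right n
  exact .equiv (DerivedHom.extEquiv _ M n)

theorem exists_finset_card_le_arithRank (I : Ideal R) :
    ∃ S : Finset R, S.card ≤ arithRank I ∧ (Ideal.span (S : Set R)).radical = I.radical := by
  classical
  obtain ⟨f, hf⟩ : arithRank I ∈
      {n : ℕ | ∃ f : Fin n → R, (Ideal.span (Set.range f)).radical = I.radical} := by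
    obtain ⟨n, f, hf⟩ := Submodule.fg_iff_exists_fin_generating_family.1 I.fg_of_isNoetherianRing
    exact Nat.sInf_mem ⟨n, f, congrArg Ideal.radical hf⟩
  exact ⟨Finset.univ.image f, Finset.card_image_le.trans_eq (Finset.card_fin _), by simpa using hf⟩

theorem finite_ext_of_arithRank_lt (hd : arithRank 𝔞 < d) (hM : IsPowTorsion 𝔞 M)
    (h : ∀ i < d, Module.Finite R (Ext (ModuleCat.of R (R ⧸ 𝔞)) M i)) (n : ℕ) :
    Module.Finite R (Ext (ModuleCat.of R (R ⧸ 𝔞)) M n) := by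
  obtain ⟨S, hcard, hrad⟩ := exists_finset_card_le_arithRank 𝔞
  have hle : Ideal.span (S : Set R) ≤ 𝔞.radical := hrad ▸ Ideal.le_radical
  have hge : 𝔞 ≤ (Ideal.span (S : Set R)).radical := hrad ▸ Ideal.le_radical
  exact finite_ext_of_le_radical hle (fun i _ => finite_ext_of_card_lt S (hcard.trans_lt hd)
    (hM.of_le_radical hle) (fun i => finite_ext_of_le_radical hge h) i) n.lt_succ_self

theorem IsPowTorsion.finite_ext
    (hd : ringKrullDim R ≤ (d + 1 : ℕ) ∨ ringKrullDim (R ⧸ 𝔞) ≤ d ∨ arithRank 𝔞 ≤ d)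
    (hM : IsPowTorsion 𝔞 M)
    (h : ∀ i < d + 1, Module.Finite R (Ext (ModuleCat.of R (R ⧸ 𝔞)) M i)) (n : ℕ) :
    Module.Finite R (Ext (ModuleCat.of R (R ⧸ 𝔞)) M n) := by
  obtain hR | hquot | hara := hd
  · have := finite_torsionBySet_of_finite_ext_zero (h 0 d.succ_pos)
    exact (hM.almostFinite_of_ringKrullDim_le hR).finite_ext hM h n
  · exact AlmostFinite.finite_ext (mod_cast hM.almostFinite_of_ringKrullDim_quotient_le hquot)
      hM h n
  · exact finite_ext_of_arithRank_lt (Nat.lt_succ_of_le hara) hM h n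

end FiniteExt

section ExtComparison

open Abelian CochainComplex HomComplex

section ProjectiveResolution

variable {C : Type*} [Category* C] [Abelian C] [HasExt.{w} C] {X Y : C}
  (P : ProjectiveResolution X)

theorem smul_extMk {R : Type*} [Ring R] [Linear R C] {n m : ℕ} (r : R) (f : P.complex.X n ⟶ Y)
    (hm : n + 1 = m) (hf : P.complex.d m n ≫ f = 0) :
    r • P.extMk f m hm hf = P.extMk (r • f) m hm (by simp [hf]) := by
  rw [Ext.smul_eq_comp_mk₀, P.extMk_comp_mk₀]
  congr 1
  simp

theorem extMk_zero_eq_zero_iff {m : ℕ} (f : P.complex.X 0 ⟶ Y) (hm : 0 + 1 = m)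
    (hf : P.complex.d m 0 ≫ f = 0) : P.extMk f m hm hf = 0 ↔ f = 0 := by
  refine ⟨fun h => ?_, fun h => by subst h; simp⟩
  rw [← P.extEquivCohomologyClass.apply_eq_iff_eq,
    ProjectiveResolution.extEquivCohomologyClass_extMk,
    ProjectiveResolution.extEquivCohomologyClass_zero, CohomologyClass.mk_eq_zero_iff,
    Cocycle.toSingleMk_mem_coboundaries_iff _ _ _ _ _ 1 (by lia)] at h
  obtain ⟨g, hg⟩ := h
  have hX₁ : Limits.IsZero (P.cochainComplex.X 1) :=
    P.complex.isZero_extend_X ComplexShape.embeddingDownNat 1 fun i hi => by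
      simp only [ComplexShape.embeddingDownNat_f] at hi
      lia
  rw [hX₁.eq_of_src g 0, Limits.comp_zero] at hg
  rw [← cancel_epi (P.cochainComplexXIso (-(0 : ℕ)) 0 rfl).hom, Limits.comp_zero, ← hg]

theorem extMk_eq_zero_iff_exists_prev {n m : ℕ} (f : P.complex.X n ⟶ Y) (hm : n + 1 = m)
    (hf : P.complex.d m n ≫ f = 0) : P.extMk f m hm hf = 0 ↔
      ∃ g : P.complex.X ((ComplexShape.up ℕ).prev n) ⟶ Y, P.complex.d n _ ≫ g = f := by
  cases n with
  | zero =>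
    rw [extMk_zero_eq_zero_iff, P.complex.shape _ _ (by simp)]
    simp [eq_comm]
  | succ p => rw [P.extMk_eq_zero_iff _ _ _ _ ((ComplexShape.up ℕ).prev (p + 1)) (by simp)]

end ProjectiveResolution

variable {R : Type u} [CommRing R]

/-- The identification of `extObj`, defined by deriving `Hom` in its second argument along
projective resolutions of the first, with Mathlib's `Abelian.Ext`. -/
noncomputable def extObjEquiv (N M : ModuleCat.{u} R) (n : ℕ) :
    extObj N M n ≃ₗ[R] Ext N M n :=
  let P := projectiveResolution N
  let S := (P.complex.linearYonedaObj R M).sc n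
  let m := (ComplexShape.up ℕ).next n
  have hm : n + 1 = m := (CochainComplex.next ℕ n).symm
  have hker (f : LinearMap.ker S.g.hom) : P.complex.d m n ≫ (f.1 : P.complex.X n ⟶ M) = 0 := f.2
  let φ : LinearMap.ker S.g.hom →ₗ[R] Ext N M n :=
    { toFun f := P.extMk f.1 m hm (hker f)
      map_add' f g := (P.add_extMk _ _ m hm (hker f) (hker g)).symm
      map_smul' r f := (smul_extMk P r _ hm (hker f)).symm }
  have hφ : Function.Surjective φ := fun e => by
    obtain ⟨f, hf, rfl⟩ := P.extMk_surjective e m hm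
    exact ⟨⟨f, hf⟩, rfl⟩
  have hker_φ : LinearMap.range S.moduleCatToCycles = LinearMap.ker φ := by
    ext f
    refine Iff.trans ⟨?_, ?_⟩ (extMk_eq_zero_iff_exists_prev P f.1 hm (hker f)).symm
    · rintro ⟨g, rfl⟩
      exact ⟨g, rfl⟩
    · rintro ⟨g, hg⟩
      exact ⟨g, Subtype.ext hg⟩
  (P.isoExt n M).toLinearEquiv ≪≫ₗ S.moduleCatHomologyIso.toLinearEquiv ≪≫ₗ
    Submodule.quotEquivOfEq _ _ hker_φ ≪≫ₗ φ.quotKerEquivOfSurjective hφ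

theorem finite_extIdeal_iff (I : Ideal R) (M : ModuleCat.{u} R) (n : ℕ) :
    Module.Finite R (extIdeal I n M) ↔ Module.Finite R (Ext (ModuleCat.of R (R ⧸ I)) M n) :=
  Module.Finite.equiv_iff (extObjEquiv _ M n)

theorem isCofinite_iff [IsNoetherianRing R] {𝔞 : Ideal R} {M : ModuleCat.{u} R} :
    IsCofinite 𝔞 M ↔ IsPowTorsion 𝔞 M ∧
      ∀ n, Module.Finite R (Ext (ModuleCat.of R (R ⧸ 𝔞)) M n) := by
  simp only [IsCofinite, isPowTorsion_iff_support_subset_zeroLocus, finite_extIdeal_iff]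

end ExtComparison

section ShortExact

open Abelian

variable {R : Type u} [CommRing R] [IsNoetherianRing R] {S : ShortComplex (ModuleCat.{u} R)}
  {N : ModuleCat.{u} R} {n : ℕ}

theorem finite_ext_X₂ (hS : S.ShortExact) [Module.Finite R (Ext N S.X₁ n)]
    [Module.Finite R (Ext N S.X₃ n)] : Module.Finite R (Ext N S.X₂ n) :=
  moduleFinite_of_exact ((Ext.mk₀ S.f).postcompOfLinear R N (add_zero n))
    ((Ext.mk₀ S.g).postcompOfLinear R N (add_zero n))
    ((ShortComplex.ab_exact_iff_function_exact _).1 (Ext.covariant_sequence_exact₂' N hS n))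

theorem finite_ext_X₃ (hS : S.ShortExact) [Module.Finite R (Ext N S.X₂ n)]
    [Module.Finite R (Ext N S.X₁ (n + 1))] : Module.Finite R (Ext N S.X₃ n) :=
  moduleFinite_of_exact ((Ext.mk₀ S.g).postcompOfLinear R N (add_zero n))
    (hS.extClass.postcompOfLinear R N rfl)
    ((ShortComplex.ab_exact_iff_function_exact _).1 (Ext.covariant_sequence_exact₃' N hS n _ rfl))

theorem finite_ext_X₁ (hS : S.ShortExact) [Module.Finite R (Ext N S.X₂ n)]
    (h₃ : ∀ m < n, Module.Finite R (Ext N S.X₃ m)) : Module.Finite R (Ext N S.X₁ n) := by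
  cases n with
  | zero =>
    have := hS.mono_f
    exact .of_injective ((Ext.mk₀ S.f).postcompOfLinear R N (add_zero 0))
      (Ext.postcomp_mk₀_injective_of_mono N S.f)
  | succ n =>
    have := h₃ n n.lt_succ_self
    exact moduleFinite_of_exact (hS.extClass.postcompOfLinear R N rfl)
      ((Ext.mk₀ S.f).postcompOfLinear R N (add_zero (n + 1)))
      ((ShortComplex.ab_exact_iff_function_exact _).1
        (Ext.covariant_sequence_exact₁' N hS n _ rfl))

end ShortExact

section Opcycles

open Limits

variable {C : Type*} [Category* C] [Abelian C] {ι : Type*} {c : ComplexShape ι}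
  (K : HomologicalComplex C c)

theorem shortExact_image_opcycles (i : ι) :
    (ShortComplex.mk _ _
      (Abelian.image_ι_comp_eq_zero (K.d_pOpcycles (c.prev i) i))).ShortExact where
  exact := (ShortComplex.exact_iff_exact_image_ι (.mk _ _ (K.d_pOpcycles (c.prev i) i))).1
    (ShortComplex.exact_of_g_is_cokernel _ (K.opcyclesIsCokernel _ i rfl))

theorem d_comp_factorThruImage_d (i j k : ι) : K.d i j ≫ Abelian.factorThruImage (K.d j k) = 0 := by
  rw [← cancel_mono (Abelian.image.ι (K.d j k)), Category.assoc, Abelian.image.fac, K.d_comp_d,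
    zero_comp]

/-- The map induced by the differential `K.d i j` from the cokernel of the previous differential
onto the boundaries in degree `j`. -/
noncomputable def opcyclesToImage (i j : ι) : K.opcycles i ⟶ Abelian.image (K.d i j) :=
  K.descOpcycles (Abelian.factorThruImage (K.d i j)) (c.prev i) rfl
    (d_comp_factorThruImage_d K _ i j)

theorem opcyclesToImage_comp_image_ι (i j : ι) :
    opcyclesToImage K i j ≫ Abelian.image.ι (K.d i j) = K.fromOpcycles i j := by
  rw [← cancel_epi (K.pOpcycles i), opcyclesToImage, K.p_descOpcycles_assoc, Abelian.image.fac,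
    K.p_fromOpcycles]

theorem homologyι_comp_opcyclesToImage (i j : ι) :
    K.homologyι i ≫ opcyclesToImage K i j = 0 := by
  rw [← cancel_mono (Abelian.image.ι (K.d i j)), Category.assoc, opcyclesToImage_comp_image_ι,
    K.homologyι_comp_fromOpcycles, zero_comp]

theorem shortExact_homology_opcycles (i : ι) :
    (ShortComplex.mk _ _ (homologyι_comp_opcyclesToImage K i (c.next i))).ShortExact where
  exact := by
    let φ : ShortComplex.mk _ _ (homologyι_comp_opcyclesToImage K i (c.next i)) ⟶
        .mk _ _ (K.homologyι_comp_fromOpcycles i (c.next i)) :=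
      { τ₁ := 𝟙 _
        τ₂ := 𝟙 _
        τ₃ := Abelian.image.ι _
        comm₂₃ := by simp [opcyclesToImage_comp_image_ι] }
    have : Mono φ.τ₃ := inferInstanceAs (Mono (Abelian.image.ι _))
    rw [ShortComplex.exact_iff_of_epi_of_isIso_of_mono φ]
    exact ShortComplex.exact_of_f_is_kernel _ (K.homologyIsKernel i _ rfl)
  epi_g := epi_of_epi_fac (K.p_descOpcycles _ (c.prev i) rfl (d_comp_factorThruImage_d K _ i _))

end Opcycles

section Homology

open Abelian Limits

section Torsion

variable {R : Type u} [CommRing R] {I : Ideal R} {M N : ModuleCat.{u} R} (f : M ⟶ N)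

theorem IsPowTorsion.of_mono [Mono f] (hN : IsPowTorsion I N) : IsPowTorsion I M :=
  hN.of_injective f.hom ((ModuleCat.mono_iff_injective f).1 inferInstance)

theorem IsPowTorsion.of_epi [Epi f] (hM : IsPowTorsion I M) : IsPowTorsion I N :=
  hM.of_surjective f.hom ((ModuleCat.epi_iff_surjective f).1 inferInstance)

end Torsion

section Complex

variable {R : Type u} [CommRing R] {ι : Type*} {c : ComplexShape ι}
  {X : HomologicalComplex (ModuleCat.{u} R) c} {N : ModuleCat.{u} R} {n : ℕ}

theorem finite_extIdeal_cokernel_iff {I : Ideal R} (i : ι) :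
    Module.Finite R (extIdeal I n (cokernel (X.d (c.prev i) i))) ↔
      Module.Finite R (Ext (ModuleCat.of R (R ⧸ I)) (X.opcycles i) n) := by
  let e : cokernel (X.d (c.prev i) i) ≅ X.opcycles i :=
    (cokernelIsCokernel _).coconePointUniqueUpToIso (X.opcyclesIsCokernel _ i rfl)
  rw [← finite_extIdeal_iff]
  exact Module.Finite.equiv_iff (((_root_.Ext R (ModuleCat.{u} R) n).obj
    (Opposite.op (ModuleCat.of R (R ⧸ I)))).mapIso e).toLinearEquiv

variable [IsNoetherianRing R]

theorem finite_ext_image_d (i j : ι) [Module.Finite R (Ext N (X.X j) n)]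
    (h : ∀ m < n, Module.Finite R (Ext N (X.opcycles j) m)) :
    Module.Finite R (Ext N (Abelian.image (X.d i j)) n) := by
  by_cases hij : c.Rel i j
  · obtain rfl := c.prev_eq' hij
    exact finite_ext_X₁ (shortExact_image_opcycles X j) h
  · have hzero : IsZero (Abelian.image (X.d i j)) :=
      .of_mono_eq_zero (Abelian.image.ι (X.d i j)) <|
        zero_of_epi_comp (Abelian.factorThruImage (X.d i j)) (by
          rw [Abelian.image.fac, X.shape i j hij])
    have : Subsingleton (Ext N (Abelian.image (X.d i j)) n) :=
      AddCommGrpCat.subsingleton_of_isZero ((extFunctorObj N n).map_isZero hzero)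
    infer_instance

theorem finite_ext_opcycles (hX : ∀ i n, Module.Finite R (Ext N (X.X i) n))
    (hH : ∀ i n, Module.Finite R (Ext N (X.homology i) n)) (i : ι) :
    Module.Finite R (Ext N (X.opcycles i) n) := by
  induction n using Nat.strong_induction_on generalizing i with
  | h n ih =>
    have := hX (c.next i) n
    have := hH i n
    have := finite_ext_image_d i (c.next i) fun m hm => ih m hm _
    exact finite_ext_X₂ (shortExact_homology_opcycles X i)

theorem finite_ext_homology (hX : ∀ i n, Module.Finite R (Ext N (X.X i) n))
    (hB : ∀ i j n, Module.Finite R (Ext N (Abelian.image (X.d i j)) n)) (i : ι) (n : ℕ) :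
    Module.Finite R (Ext N (X.homology i) n) := by
  have := hX i n
  have := hB (c.prev i) i (n + 1)
  have := finite_ext_X₃ (N := N) (n := n) (shortExact_image_opcycles X i)
  exact finite_ext_X₁ (shortExact_homology_opcycles X i) fun m _ => hB i _ m

end Complex

theorem homology_isCofinite_iff_ext_coker_general
    {R : Type u} [CommRing R] [IsNoetherianRing R] (n : ℕ) (𝔞 : Ideal R)
    (hn : ringKrullDim R ≤ (n + 1 : ℕ) ∨ ringKrullDim (R ⧸ 𝔞) ≤ n ∨ arithRank 𝔞 ≤ n)
    {ι : Type*} {c : ComplexShape ι} (X : HomologicalComplex (ModuleCat.{u} R) c)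
    (hX : ∀ i, IsCofinite 𝔞 (X.X i)) :
    (∀ i, IsCofinite 𝔞 (X.homology i)) ↔
      ∀ i, ∀ j < n, Module.Finite R (extIdeal 𝔞 j (cokernel (X.d (c.prev i) i))) := by
  simp only [isCofinite_iff, forall_and, finite_extIdeal_cokernel_iff] at hX ⊢
  refine ⟨fun h i j _ => finite_ext_opcycles hX.2 h.2 i, fun h => ?_⟩
  have hB (i j : ι) : ∀ k, Module.Finite R
      (Ext (ModuleCat.of R (R ⧸ 𝔞)) (Abelian.image (X.d i j)) k) :=
    ((hX.1 j).of_mono (Abelian.image.ι (X.d i j))).finite_ext hn fun k hk =>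
      have := hX.2 j k
      finite_ext_image_d i j fun m hm => h j m (by lia)
  exact ⟨fun i => ((hX.1 i).of_epi (X.pOpcycles i)).of_mono (X.homologyι i),
    finite_ext_homology hX.2 hB⟩

end Homology

/-- Yang–Shen, Theorem 3.7: let `d ≥ 1` and `𝔞` a proper ideal of a noetherian local ring `R`
such that `dim R = d`, or `dim R/𝔞 = d - 1`, or `ara 𝔞 = d - 1`. For a (ℤ-indexed) chain
complex `X` of `𝔞`-cofinite `R`-modules, all homology modules `H_i(X)` are `𝔞`-cofinite if and
only if `Ext^j_R(R/𝔞, coker d_{i+1})` is finitely generated for every `i ∈ ℤ` and `j ≤ d - 2`. -/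
theorem homology_isCofinite_iff_ext_coker
    {R : Type u} [CommRing R] [IsNoetherianRing R] [IsLocalRing R]
    (d : ℕ) (hd : 1 ≤ d) (𝔞 : Ideal R) (ha : 𝔞 ≠ ⊤)
    (hcase : ringKrullDim R = d ∨ ringKrullDim (R ⧸ 𝔞) = (d - 1 : ℕ) ∨ arithRank 𝔞 = d - 1)
    (X : ChainComplex (ModuleCat.{u} R) ℤ)
    (hX : ∀ i : ℤ, IsCofinite 𝔞 (X.X i)) :
    (∀ i : ℤ, IsCofinite 𝔞 (X.homology i)) ↔
      ∀ (i : ℤ) (j : ℕ), (j : ℤ) ≤ (d : ℤ) - 2 →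
        Module.Finite R (extIdeal 𝔞 j (Limits.cokernel (X.d (i + 1) i))) := by
  obtain ⟨n, rfl⟩ := Nat.exists_eq_add_of_le' hd
  rw [homology_isCofinite_iff_ext_coker_general n 𝔞
    (hcase.imp le_of_eq (.imp le_of_eq le_of_eq)) X hX]
  refine forall₂_congr fun i j => ?_
  rw [ChainComplex.prev]
  exact imp_congr_left (by push_cast; lia)
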